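/- arXiv:1110.1963 — 2 statements merged into one kernel-verified Lean document; each statement's English description precedes it below -/
import Mathlib

section
/- (Main theorem) Let s = ρ_{d+1}(I) − ρ_{d+1}(J) be the number of square-free monomials of degree d+1 lying in I \ J. If r > s, then depth_S (I/J) = d, independently of the characteristic of K. -/
open MvPolynomial

/-- The square-free monomial `∏ i ∈ T, X i` associated to a set `T` of variables. -/
noncomputable def sqMon (K : Type) [Field K] {n : ℕ} (T : Finset (Fin n)) :
    MvPolynomial (Fin n) K :=
  ∏ i ∈ T, X i

/-- `GenBySqMonOfDeg K P I` means: `I` is generated by square-free monomials whose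
degrees satisfy the predicate `P`. -/
def GenBySqMonOfDeg (K : Type) [Field K] {n : ℕ} (P : ℕ → Prop)
    (I : Ideal (MvPolynomial (Fin n) K)) : Prop :=
  ∃ G : Set (Finset (Fin n)), (∀ T ∈ G, P T.card) ∧ I = Ideal.span (sqMon K '' G)

/-- `rho K d I` : the number of square-free monomials of degree `d` belonging to `I`. -/
noncomputable def rho (K : Type) [Field K] {n : ℕ} (d : ℕ)
    (I : Ideal (MvPolynomial (Fin n) K)) : ℕ :=
  Set.ncard {T : Finset (Fin n) | T.card = d ∧ sqMon K T ∈ I}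

/-- The maximal graded ideal `(x_1, …, x_n)` of `K[x_1, …, x_n]`. -/
noncomputable def maxGraded (K : Type) [Field K] (n : ℕ) :
    Ideal (MvPolynomial (Fin n) K) :=
  Ideal.span (Set.range (X : Fin n → MvPolynomial (Fin n) K))

/-- The depth of the module `M` with respect to the ideal `I` : the supremum of the
lengths of `M`-regular sequences consisting of elements of `I`. -/
noncomputable def moduleDepth {R : Type} [CommRing R] (I : Ideal R)
    (M : Type) [AddCommGroup M] [Module R M] : ℕ∞ :=
  sSup {k : ℕ∞ | ∃ rs : List R, k = (rs.length : ℕ∞) ∧ (∀ r ∈ rs, r ∈ I) ∧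
    RingTheory.Sequence.IsRegular M rs}

/-- The `R`-module `I/J` (more precisely `I/(I ∩ J)`, which is `I/J` when `J ≤ I`). -/
noncomputable abbrev idealQuot {R : Type} [CommRing R] (I J : Ideal R) : Type :=
  ↥I ⧸ (Submodule.comap I.subtype (J : Submodule R R))


def ksgn {n : ℕ} (i : Fin n) (A : Finset (Fin n)) : ℤ := (-1) ^ (A.filter (· < i)).card

lemma ksgn_mul_self {n : ℕ} (i : Fin n) (A : Finset (Fin n)) : ksgn i A * ksgn i A = 1 := by
  unfold ksgn; rw [← pow_add, ← two_mul, pow_mul]; simp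

lemma ksgn_erase_lt {n : ℕ} {i j : Fin n} {A : Finset (Fin n)} (hj : j ∈ A) (h : j < i) :
    ksgn i (A.erase j) = - ksgn i A := by
  unfold ksgn
  have : (A.filter (· < i)).card = ((A.erase j).filter (· < i)).card + 1 := by
    rw [Finset.filter_erase, Finset.card_erase_add_one]
    simp [hj, h]
  rw [this, pow_succ]; simp

lemma ksgn_erase_gt {n : ℕ} {i j : Fin n} {A : Finset (Fin n)} (h : i ≤ j) :
    ksgn i (A.erase j) = ksgn i A := by
  unfold ksgn
  rw [Finset.filter_erase, Finset.erase_eq_of_notMem]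
  simp [h]

lemma ksgn_swap {n : ℕ} {i j : Fin n} {A : Finset (Fin n)} (hi : i ∈ A) (hj : j ∈ A)
    (hij : i ≠ j) :
    ksgn i A * ksgn j (A.erase i) = - (ksgn j A * ksgn i (A.erase j)) := by
  rcases lt_or_gt_of_ne hij with h | h
  · rw [ksgn_erase_lt hi h, ksgn_erase_gt h.le]; ring
  · rw [ksgn_erase_lt hj h, ksgn_erase_gt h.le]; ring

section
variable {R : Type} [CommRing R] {n : ℕ} (x : Fin n → R)

def kD {M : Type} [AddCommGroup M] [Module R M] (φ : Finset (Fin n) → M) (A : Finset (Fin n)) : M :=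
  ∑ i ∈ A, ksgn i A • x i • φ (A.erase i)

def kH {M : Type} [AddCommGroup M] (i : Fin n) (φ : Finset (Fin n) → M)
    (A : Finset (Fin n)) : M :=
  if i ∈ A then 0 else ksgn i (insert i A) • φ (insert i A)

variable {M : Type} [AddCommGroup M] [Module R M]

lemma kD_zero : kD x (0 : Finset (Fin n) → M) = 0 := by
  funext A; simp [kD]

lemma kD_add (φ ψ : Finset (Fin n) → M) : kD x (φ + ψ) = kD x φ + kD x ψ := by
  funext A; simp [kD, Finset.sum_add_distrib]

lemma kD_smul (a : R) (φ : Finset (Fin n) → M) : kD x (a • φ) = a • kD x φ := by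
  funext A
  simp only [kD, Pi.smul_apply, Finset.smul_sum]
  refine Finset.sum_congr rfl fun i _ => ?_
  rw [smul_comm (x i) a, smul_comm _ a]

lemma kD_map {N : Type} [AddCommGroup N] [Module R N] (g : M →ₗ[R] N)
    (φ : Finset (Fin n) → M) : kD x (fun A => g (φ A)) = fun A => g (kD x φ A) := by
  funext A
  simp [kD]

lemma kD_sum {ι : Type} (s : Finset ι) (φ : ι → Finset (Fin n) → M) :
    kD x (∑ i ∈ s, φ i) = ∑ i ∈ s, kD x (φ i) := by
  classical
  induction s using Finset.induction_on with
  | empty => simp [kD_zero]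
  | insert a s ha ih => rw [Finset.sum_insert ha, Finset.sum_insert ha, kD_add, ih]

lemma kD_kD (φ : Finset (Fin n) → M) : kD x (kD x φ) = 0 := by
  funext A
  simp only [kD, Finset.smul_sum, Pi.zero_apply]
  rw [Finset.sum_sigma']
  refine Finset.sum_involution (fun p _ => ⟨p.2, p.1⟩) ?_ ?_ ?_ ?_
  · rintro ⟨i, j⟩ h
    simp only [Finset.mem_sigma, Finset.mem_erase] at h
    obtain ⟨hi, hji, hj⟩ := h
    have e := ksgn_swap hi hj (Ne.symm hji)
    dsimp only
    rw [smul_comm (x i) (ksgn j (A.erase i)), smul_comm (x j) (ksgn i (A.erase j)), smul_smul,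
      smul_smul, e, Finset.erase_right_comm, smul_comm (x j) (x i), neg_smul]
    rw [mul_smul (x i), mul_smul (ksgn j A)]
    exact neg_add_cancel _
  · rintro ⟨i, j⟩ h _ heq
    simp only [Finset.mem_sigma, Finset.mem_erase] at h
    simp only [Sigma.mk.injEq] at heq
    exact h.2.1 heq.1
  · rintro ⟨i, j⟩ h
    simp only [Finset.mem_sigma, Finset.mem_erase] at h ⊢
    exact ⟨h.2.2, Ne.symm h.2.1, h.1⟩
  · rintro ⟨i, j⟩ h
    rfl

lemma kH_homotopy (i : Fin n) (φ : Finset (Fin n) → M) :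
    kD x (kH i φ) + kH i (kD x φ) = x i • φ := by
  funext A
  simp only [Pi.add_apply, Pi.smul_apply]
  by_cases hi : i ∈ A
  · have : kH i (kD x φ) A = 0 := by simp [kH, hi]
    rw [this, add_zero, kD, Finset.sum_eq_single i]
    · rw [kH, if_neg (by simp), Finset.insert_erase hi, smul_comm (x i), smul_smul,
        ksgn_mul_self, one_smul]
    · intro j hj hji
      rw [kH, if_pos (by simp [hi, Ne.symm hji])]
      simp
    · intro h; exact absurd hi h
  · rw [show kH i (kD x φ) A = ksgn i (insert i A) • kD x φ (insert i A) by simp [kH, hi]]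
    simp only [kD]
    rw [Finset.sum_insert hi, smul_add, smul_smul, ksgn_mul_self, one_smul,
      Finset.erase_insert hi, ← add_assoc, add_right_comm, add_eq_right,
      Finset.smul_sum, ← Finset.sum_add_distrib]
    refine Finset.sum_eq_zero fun j hj => ?_
    have hji : j ≠ i := fun h => hi (h ▸ hj)
    rw [kH, if_neg (by simp [hi]), ← Finset.erase_insert_of_ne hji.symm, smul_comm (x j), smul_smul,
      smul_smul]
    have e := ksgn_swap (A := insert i A) (Finset.mem_insert_self i A)
      (Finset.mem_insert_of_mem hj) hji.symm
    rw [Finset.erase_insert hi] at e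
    have e2 : ksgn j A * ksgn i ((insert i A).erase j) = - (ksgn i (insert i A) * ksgn j (insert i A)) := by
      have a1 := ksgn_mul_self i (insert i A)
      have a2 := ksgn_mul_self j (insert i A)
      calc _ = (ksgn i (insert i A) * ksgn i (insert i A)) * (ksgn j (insert i A) * ksgn j (insert i A)) * (ksgn j A * ksgn i ((insert i A).erase j)) := by rw [a1, a2]; ring
        _ = ksgn i (insert i A) * ksgn j (insert i A) * ksgn j (insert i A) * ksgn i ((insert i A).erase j) * (ksgn i (insert i A) * ksgn j A) := by ring
        _ = - (ksgn i (insert i A) * ksgn j (insert i A)) * (ksgn j (insert i A) * ksgn j (insert i A)) * (ksgn i ((insert i A).erase j) * ksgn i ((insert i A).erase j)) := by rw [e]; ring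
        _ = _ := by rw [ksgn_mul_self, ksgn_mul_self]; ring
    rw [e2, neg_smul, neg_add_cancel]

lemma kH_supp {d : ℕ} (i : Fin n) (φ : Finset (Fin n) → M) (h : ∀ A, A.card ≠ d → φ A = 0)
    (A : Finset (Fin n)) (hA : A.card + 1 ≠ d) : kH i φ A = 0 := by
  unfold kH
  split_ifs with hi
  · rfl
  · rw [h, smul_zero]; rwa [Finset.card_insert_of_notMem hi]

lemma exists_primitive {d : ℕ} (φ : Finset (Fin n) → M) (h : ∀ A, A.card ≠ d → φ A = 0)
    (hφ : kD x φ = 0) (a : R) (ha : a ∈ Ideal.span (Set.range x)) :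
    ∃ ψ : Finset (Fin n) → M, (∀ A, A.card + 1 ≠ d → ψ A = 0) ∧ kD x ψ = a • φ := by
  obtain ⟨c, rfl⟩ := (Ideal.mem_span_range_iff_exists_fun).1 ha
  refine ⟨∑ i, c i • kH i φ, ?_, ?_⟩
  · intro A hA
    rw [Finset.sum_apply]
    refine Finset.sum_eq_zero fun i _ => ?_
    rw [Pi.smul_apply, kH_supp i φ h A hA, smul_zero]
  · rw [kD_sum, Finset.sum_smul]
    refine Finset.sum_congr rfl fun i _ => ?_
    have := kH_homotopy x i φ
    have z : kH i (kD x φ) = 0 := by rw [hφ]; funext A; simp [kH]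
    rw [z, add_zero] at this
    rw [kD_smul, this, smul_smul]
end

open scoped Pointwise in
lemma length_le_of_koszul {R : Type} [CommRing R] {n : ℕ} (x : Fin n → R) (rs : List R) :
    ∀ (M : Type) [AddCommGroup M] [Module R M] (d : ℕ) (φ : Finset (Fin n) → M)
    (_ : ∀ A, A.card ≠ d → φ A = 0) (_ : kD x φ = 0) (_ : ¬ ∃ ζ, kD x ζ = φ)
    (_ : ∀ a ∈ rs, a ∈ Ideal.span (Set.range x))
    (_ : RingTheory.Sequence.IsWeaklyRegular M rs), rs.length ≤ d := by
  induction rs with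
  | nil => intros; simp
  | cons a rs ih =>
    intro M _ _ d φ hs hc hb hm hreg
    rw [RingTheory.Sequence.isWeaklyRegular_cons_iff] at hreg
    obtain ⟨hreg, hreg'⟩ := hreg
    obtain ⟨ψ, hψ, hψD⟩ := exists_primitive x φ hs hc a (hm a (by simp))
    have hinj : ∀ φ' : Finset (Fin n) → M, a • φ = a • φ' → φ = φ' := by
      intro φ' h
      funext A
      exact hreg (congrFun h A)
    cases d with
    | zero =>
      exfalso
      have : ψ = 0 := by funext A; exact hψ A (by simp)
      rw [this, kD_zero] at hψD
      exact hb ⟨0, by rw [kD_zero]; exact (hinj 0 (by rw [← hψD, smul_zero])).symm⟩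
    | succ d =>
      have := ih (QuotSMulTop a M) d (fun A => (Submodule.mkQ (a • (⊤ : Submodule R M))) (ψ A)) ?_ ?_ ?_
        (fun b hb => hm b (by simp [hb])) hreg'
      · simpa using this
      · intro A hA
        rw [hψ A (by simpa using hA), map_zero]
      · rw [kD_map, hψD]
        funext A
        rw [Submodule.mkQ_apply, Pi.zero_apply, Submodule.Quotient.mk_eq_zero]
        exact Submodule.smul_mem_pointwise_smul _ _ _ trivial
      · rintro ⟨ζ, hζ⟩
        choose η hη using fun A => Submodule.mkQ_surjective _ (ζ A)
        have e : kD x (fun A => (Submodule.mkQ (a • (⊤ : Submodule R M))) (η A)) = kD x ζ := by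
          congr 1; funext A; exact hη A
        rw [kD_map, hζ] at e
        have : ∀ A, ∃ y : M, a • y = ψ A - kD x η A := by
          intro A
          have := congrFun e A
          have h2 : ψ A - kD x η A ∈ a • (⊤ : Submodule R M) := by
            rw [← Submodule.Quotient.mk_eq_zero, Submodule.Quotient.mk_sub, sub_eq_zero]
            exact this.symm
          obtain ⟨y, -, hy⟩ := h2
          exact ⟨y, hy⟩
        choose y hy using this
        refine hb ⟨y, (hinj _ ?_).symm⟩
        have : ψ = kD x η + a • y := by
          funext A; simp [hy]
        rw [← hψD, this, kD_add, kD_kD, zero_add, kD_smul]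

noncomputable def qId (K : Type) [Field K] {n : ℕ} (T : Finset (Fin n)) (i : ℕ) :
    Ideal (MvPolynomial (Fin n) K) :=
  Ideal.span (X '' {j | j ∉ T}) ⊔ Ideal.span ((fun k => esymm (Fin n) K (k + 1)) '' Set.Iio i)

section
variable {K : Type} [Field K] {n : ℕ}
attribute [local instance] MvPolynomial.gradedAlgebra

lemma qId_zero (T : Finset (Fin n)) : qId K T 0 = Ideal.span (X '' {j | j ∉ T}) := by
  simp [qId]

lemma qId_succ (T : Finset (Fin n)) (i : ℕ) :
    qId K T (i + 1) = qId K T i ⊔ Ideal.span {esymm (Fin n) K (i + 1)} := by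
  unfold qId
  have : Set.Iio (i + 1) = Set.Iio i ∪ {i} := by ext; simp; try omega
  rw [this, Set.image_union, Ideal.span_union, Set.image_singleton, sup_assoc]

lemma qId_mono (T : Finset (Fin n)) (i : ℕ) : qId K T i ≤ qId K T (i + 1) := by
  rw [qId_succ]; exact le_sup_left

lemma qId_erase {T : Finset (Fin n)} {t : Fin n} (ht : t ∈ T) (i : ℕ) :
    qId K (T.erase t) i = qId K T i ⊔ Ideal.span {X t} := by
  unfold qId
  have : {j | j ∉ T.erase t} = {j | j ∉ T} ∪ {t} := by
    ext j; simp; tauto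
  rw [this, Set.image_union, Ideal.span_union, Set.image_singleton, sup_right_comm]

lemma esymm_hom (i : ℕ) : (esymm (Fin n) K i).IsHomogeneous i := by
  unfold esymm
  refine IsHomogeneous.sum _ _ _ fun t ht => ?_
  have := IsHomogeneous.prod t (fun i => (X i : MvPolynomial (Fin n) K)) (fun _ => 1)
    (fun i _ => isHomogeneous_X K i)
  simpa [(Finset.mem_powersetCard.1 ht).2] using this

lemma qId_hom (T : Finset (Fin n)) (i : ℕ) :
    (qId K T i).IsHomogeneous (homogeneousSubmodule (Fin n) K) := by
  unfold qId
  rw [← Ideal.span_union]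
  refine Ideal.homogeneous_span _ _ ?_
  rintro _ (⟨j, _, rfl⟩ | ⟨k, _, rfl⟩)
  · exact ⟨1, isHomogeneous_X K j⟩
  · exact ⟨k + 1, esymm_hom _⟩

lemma X_pow_coeff {t : Fin n} {N : ℕ} (a : MvPolynomial (Fin n) K) (j : ℕ) (hj : j < N) :
    homogeneousComponent j (X t ^ N * a) = 0 := by
  apply homogeneousComponent_eq_zero'
  intro m hm
  have : m ∈ (monomial (Finsupp.single t N) (1:K) * a).support := by
    rwa [← X_pow_eq_monomial]
  rw [mem_support_iff, coeff_monomial_mul'] at this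
  have h : Finsupp.single t N ≤ m := by
    by_contra h; simp [h] at this
  have h2 := Finsupp.degree_mono h
  simp at h2
  omega

lemma separated {Q : Ideal (MvPolynomial (Fin n) K)}
    (hQ : Q.IsHomogeneous (homogeneousSubmodule (Fin n) K)) (t : Fin n)
    (f : MvPolynomial (Fin n) K) (h : ∀ N : ℕ, ∃ q ∈ Q, ∃ a, f = q + X t ^ N * a) : f ∈ Q := by
  rw [← sum_homogeneousComponent f]
  refine Ideal.sum_mem _ fun j _ => ?_
  obtain ⟨q, hq, a, rfl⟩ := h (j + 1)
  rw [map_add, X_pow_coeff a j (by omega), add_zero]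
  exact homogeneousComponent_mem_of_mem hQ hq j

lemma qId_a0 {T : Finset (Fin n)} {t : Fin n} (ht : t ∈ T) (f : MvPolynomial (Fin n) K)
    (h : X t * f ∈ qId K T 0) : f ∈ qId K T 0 := by
  rw [qId_zero, mem_ideal_span_X_image] at h ⊢
  intro m hm
  obtain ⟨j, hj, hm'⟩ := h (Finsupp.single t 1 + m) (by
    rw [mem_support_iff, coeff_X_mul]; exact mem_support_iff.1 hm)
  refine ⟨j, hj, ?_⟩
  have : t ≠ j := fun e => hj (e ▸ ht)
  simpa [this, Finsupp.single_apply] using hm'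

lemma esymm_mod (T : Finset (Fin n)) :
    esymm (Fin n) K T.card - ∏ i ∈ T, X i ∈ qId K T 0 := by
  classical
  unfold esymm
  rw [← Finset.add_sum_erase _ _ (Finset.mem_powersetCard.2 ⟨Finset.subset_univ T, rfl⟩),
    add_sub_cancel_left, qId_zero]
  refine Ideal.sum_mem _ fun A hA => ?_
  simp only [Finset.mem_erase, Finset.mem_powersetCard] at hA
  obtain ⟨j, hjA, hjT⟩ : ∃ j ∈ A, j ∉ T := by
    by_contra! hc
    exact hA.1 (Finset.eq_of_subset_of_card_le hc hA.2.2.ge)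
  exact Ideal.mem_of_dvd _ (Finset.dvd_prod_of_mem _ hjA) (Ideal.subset_span ⟨j, hjT, rfl⟩)

lemma qId_a {T : Finset (Fin n)} {t : Fin n} (ht : t ∈ T)
    (IH : ∀ i < (T.erase t).card, ∀ f, esymm (Fin n) K (i + 1) * f ∈ qId K (T.erase t) i →
      f ∈ qId K (T.erase t) i) (i : ℕ) (hi : i ≤ (T.erase t).card) :
    ∀ f, X t * f ∈ qId K T i → f ∈ qId K T i := by
  induction i with
  | zero => exact qId_a0 ht
  | succ i ih =>
    intro f hf
    rw [qId_succ] at hf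
    obtain ⟨q, hq, y, hy, e⟩ := Submodule.mem_sup.1 hf
    obtain ⟨g, rfl⟩ := Ideal.mem_span_singleton.1 hy
    have h1 : g ∈ qId K (T.erase t) i := by
      apply IH i (by omega)
      rw [show esymm (Fin n) K (i + 1) * g = X t * f - q by rw [← e]; ring, qId_erase ht]
      exact Ideal.sub_mem _ (Ideal.mem_sup_right (Ideal.mul_mem_right _ _ (Ideal.subset_span rfl)))
        (Ideal.mem_sup_left hq)
    rw [qId_erase ht] at h1
    obtain ⟨q', hq', y', hy', e'⟩ := Submodule.mem_sup.1 h1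
    obtain ⟨g', rfl⟩ := Ideal.mem_span_singleton.1 hy'
    have h2 : f - esymm (Fin n) K (i + 1) * g' ∈ qId K T i := by
      apply ih (by omega)
      rw [show X t * (f - esymm (Fin n) K (i + 1) * g') = q + esymm (Fin n) K (i + 1) * q' by
        rw [mul_sub, ← e, ← e']; ring]
      exact Ideal.add_mem _ hq (Ideal.mul_mem_left _ _ hq')
    have h3 := Ideal.add_mem _ (qId_mono T i h2) (show esymm (Fin n) K (i + 1) * g' ∈ qId K T (i+1) by
      rw [qId_succ]
      exact (Ideal.mem_sup_right (Ideal.mul_mem_right _ _ (Ideal.subset_span rfl))))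
    simpa using h3

lemma qId_reg (T : Finset (Fin n)) : ∀ i < T.card, ∀ f,
    esymm (Fin n) K (i + 1) * f ∈ qId K T i → f ∈ qId K T i := by
  induction hk : T.card generalizing T with
  | zero => intro i hi; omega
  | succ k IH =>
    intro i hi f hf
    have hc : ∀ t ∈ T, (T.erase t).card = k := fun t ht => by
      rw [Finset.card_erase_of_mem ht]; omega
    have IH' : ∀ t ∈ T, ∀ i < (T.erase t).card, ∀ f,
        esymm (Fin n) K (i + 1) * f ∈ qId K (T.erase t) i → f ∈ qId K (T.erase t) i := by
      intro t ht
      rw [hc t ht]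
      exact IH _ (hc t ht)
    by_cases hik : i < k
    · obtain ⟨t, ht⟩ : T.Nonempty := Finset.card_pos.1 (by omega)
      apply separated (qId_hom T i) t
      intro N
      induction N generalizing f with
      | zero => exact ⟨0, zero_mem _, f, by simp⟩
      | succ N ihN =>
        have h1 : f ∈ qId K (T.erase t) i := by
          apply IH' t ht i (by rw [hc t ht]; exact hik)
          rw [qId_erase ht]; exact Ideal.mem_sup_left hf
        rw [qId_erase ht] at h1
        obtain ⟨q', hq', y', hy', e'⟩ := Submodule.mem_sup.1 h1
        obtain ⟨g, rfl⟩ := Ideal.mem_span_singleton.1 hy'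
        have h2 : esymm (Fin n) K (i + 1) * g ∈ qId K T i := by
          apply qId_a ht (IH' t ht) i (by rw [hc t ht]; omega)
          rw [show X t * (esymm (Fin n) K (i + 1) * g) =
            esymm (Fin n) K (i + 1) * f - esymm (Fin n) K (i + 1) * q' by rw [← e']; ring]
          exact Ideal.sub_mem _ hf (Ideal.mul_mem_left _ _ hq')
        obtain ⟨q, hq, a, ha⟩ := ihN g h2
        refine ⟨q' + X t * q, Ideal.add_mem _ hq' (Ideal.mul_mem_left _ _ hq), a, ?_⟩
        rw [← e', ha]; ring
    · obtain rfl : i = k := by omega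
      have key : ∀ A ⊆ T, ∀ f, (∏ j ∈ A, X j) * f ∈ qId K T i → f ∈ qId K T i := by
        intro A
        induction A using Finset.induction_on with
        | empty => intro _ f hf; simpa using hf
        | insert a A ha ihA =>
          intro hA f hf
          rw [Finset.prod_insert ha, mul_assoc] at hf
          have haT := hA (Finset.mem_insert_self a A)
          exact ihA ((Finset.subset_insert _ _).trans hA) f
            (qId_a haT (IH' a haT) i (by rw [hc a haT]) _ hf)
      apply key T subset_rfl
      have h0 : qId K T 0 ≤ qId K T i := by rw [qId_zero]; exact le_sup_left
      have := h0 (esymm_mod (K := K) T)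
      rw [hk] at this
      rw [show (∏ j ∈ T, X j) * f = esymm (Fin n) K (i + 1) * f -
        (esymm (Fin n) K (i + 1) - ∏ j ∈ T, X j) * f by ring]
      exact Ideal.sub_mem _ hf (Ideal.mul_mem_right _ _ this)

noncomputable def esList (K : Type) [Field K] (n d : ℕ) : List (MvPolynomial (Fin n) K) :=
  (List.range d).map (fun k => esymm (Fin n) K (k + 1))

lemma esList_wreg (T : Finset (Fin n)) (d : ℕ) (hd : d ≤ T.card) :
    RingTheory.Sequence.IsWeaklyRegular
      (MvPolynomial (Fin n) K ⧸ (qId K T 0)) (esList K n d) := by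
  constructor
  intro i hi
  have hi' : i < d := by simpa [esList] using hi
  have e1 : (esList K n d)[i] = esymm (Fin n) K (i + 1) := by simp [esList]
  have e2 : Ideal.ofList ((esList K n d).take i) =
      Ideal.span ((fun k => esymm (Fin n) K (k + 1)) '' Set.Iio i) := by
    unfold Ideal.ofList
    congr 1
    ext p
    simp only [esList, ← List.map_take, List.take_range, min_eq_left hi'.le]
    simp
  rw [e1, e2, isSMulRegular_quotient_iff_mem_of_smul_mem]
  have e3 : ∀ f : MvPolynomial (Fin n) K, Submodule.mkQ (qId K T 0) f ∈
      (Ideal.span ((fun k => esymm (Fin n) K (k + 1)) '' Set.Iio i) • ⊤ :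
        Submodule (MvPolynomial (Fin n) K) (MvPolynomial (Fin n) K ⧸ (qId K T 0))) ↔ f ∈ qId K T i := by
    intro f
    have : (⊤ : Submodule (MvPolynomial (Fin n) K) (MvPolynomial (Fin n) K ⧸ (qId K T 0))) =
      Submodule.map (Submodule.mkQ (qId K T 0)) ⊤ := by
      rw [Submodule.map_top, Submodule.range_mkQ]
    rw [this, ← Submodule.map_smul'', smul_eq_mul, Ideal.mul_top, ← Submodule.mem_comap,
      Submodule.comap_map_mkQ, qId_zero]
    rfl
  intro y hy
  obtain ⟨f, rfl⟩ := Submodule.mkQ_surjective _ y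
  rw [← map_smul, e3] at hy
  rw [e3]
  exact qId_reg T i (by omega) f hy
end

lemma wreg_ses {R : Type} [CommRing R] (rs : List R) :
    ∀ (A B C : Type) [AddCommGroup A] [AddCommGroup B] [AddCommGroup C] [Module R A] [Module R B]
    [Module R C] (f : A →ₗ[R] B) (g : B →ₗ[R] C) (_ : Function.Injective f)
    (_ : Function.Exact f g) (_ : Function.Surjective g)
    (_ : RingTheory.Sequence.IsWeaklyRegular A rs) (_ : RingTheory.Sequence.IsWeaklyRegular C rs),
    RingTheory.Sequence.IsWeaklyRegular B rs := by
  induction rs with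
  | nil => intros; exact RingTheory.Sequence.IsWeaklyRegular.nil _ _
  | cons a rs ih =>
    intro A B C _ _ _ _ _ _ f g hf hfg hg hA hC
    rw [RingTheory.Sequence.isWeaklyRegular_cons_iff] at hA hC ⊢
    refine ⟨isSMulRegular_of_range_eq_ker hf hfg.linearMap_ker_eq.symm hA.1 hC.1, ?_⟩
    refine ih _ _ _ (QuotSMulTop.map a f) (QuotSMulTop.map a g) ?_
      (QuotSMulTop.map_exact a hfg hg) (QuotSMulTop.map_surjective a hg) hA.2 hC.2
    have h0 : Function.Exact (0 : PUnit →ₗ[R] A) f := by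
      intro y
      constructor
      · intro hy
        exact ⟨0, by rw [map_zero]; exact (hf (by rw [hy, map_zero])).symm⟩
      · rintro ⟨z, rfl⟩; simp
    have := QuotSMulTop.map_first_exact_on_four_term_exact_of_isSMulRegular_last (r := a) h0 hfg hC.1
    rw [injective_iff_map_eq_zero]
    intro y hy
    obtain ⟨z, rfl⟩ := (this y).1 hy
    simp

section
variable {K : Type} [Field K] {n : ℕ}

lemma sqMon_eq (T : Finset (Fin n)) :
    sqMon K T = monomial (∑ i ∈ T, Finsupp.single i 1) 1 := by
  rw [monomial_sum_one]; rfl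

lemma ind_apply (T : Finset (Fin n)) (j : Fin n) :
    (∑ i ∈ T, Finsupp.single i 1 : Fin n →₀ ℕ) j = if j ∈ T then 1 else 0 := by
  classical
  rw [Finsupp.finsetSum_apply]
  simp [Finsupp.single_apply]

lemma ind_le (T : Finset (Fin n)) (m : Fin n →₀ ℕ) :
    (∑ i ∈ T, Finsupp.single i 1 : Fin n →₀ ℕ) ≤ m ↔ T ⊆ m.support := by
  constructor
  · intro h j hj
    have := h j
    rw [ind_apply, if_pos hj] at this
    simp; omega
  · intro h j
    rw [ind_apply]
    split_ifs with hj
    · have := h hj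
      simp at this; omega
    · simp

lemma mem_sqSpan (G : Set (Finset (Fin n))) (p : MvPolynomial (Fin n) K) :
    p ∈ Ideal.span (sqMon K '' G) ↔ ∀ m ∈ p.support, ∃ T ∈ G, T ⊆ m.support := by
  have : sqMon K '' G = (fun s => monomial s (1 : K)) ''
      ((fun T => (∑ i ∈ T, Finsupp.single i 1 : Fin n →₀ ℕ)) '' G) := by
    rw [Set.image_image]
    exact Set.image_congr fun T _ => sqMon_eq T
  rw [this, mem_ideal_span_monomial_image]
  simp only [Set.exists_mem_image, ind_le]

lemma supp_ind (T : Finset (Fin n)) : (∑ i ∈ T, Finsupp.single i 1 : Fin n →₀ ℕ).support = T := by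
  ext j; rw [Finsupp.mem_support_iff, ind_apply]; simp

lemma sqMon_mem_sqSpan (G : Set (Finset (Fin n))) (A : Finset (Fin n)) :
    sqMon K A ∈ Ideal.span (sqMon K '' G) ↔ ∃ T ∈ G, T ⊆ A := by
  classical
  rw [mem_sqSpan, sqMon_eq, support_monomial, if_neg one_ne_zero]
  simp only [Finset.mem_singleton, forall_eq, supp_ind]

lemma X_mul_sqMon {T : Finset (Fin n)} {j : Fin n} (hj : j ∉ T) :
    X j * sqMon K T = sqMon K (insert j T) := by
  unfold sqMon; rw [Finset.prod_insert hj]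

lemma colon_eq {F : Set (Finset (Fin n))} (hF : IsUpperSet F) {T : Finset (Fin n)} (hT : T ∉ F)
    (hmax : ∀ j ∉ T, insert j T ∈ F) (a : MvPolynomial (Fin n) K) :
    a * sqMon K T ∈ Ideal.span (sqMon K '' F) ↔ a ∈ qId K T 0 := by
  constructor
  · intro h
    rw [qId_zero, mem_ideal_span_X_image]
    rw [mem_sqSpan] at h
    intro m hm
    obtain ⟨A, hA, hAm⟩ := h (m + ∑ i ∈ T, Finsupp.single i 1) (by
      rw [mem_support_iff, sqMon_eq, coeff_mul_monomial, mul_one]; exact mem_support_iff.1 hm)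
    by_contra! hc
    apply hT
    refine hF ?_ hA
    intro j hj
    by_contra hjT
    have h1 := hAm hj
    rw [Finsupp.mem_support_iff, Finsupp.add_apply, ind_apply, if_neg hjT, hc j hjT] at h1
    exact h1 rfl
  · intro h
    rw [qId_zero] at h
    induction h using Submodule.span_induction with
    | mem x hx =>
      obtain ⟨j, hj, rfl⟩ := hx
      rw [X_mul_sqMon hj]
      exact Ideal.subset_span ⟨_, hmax j hj, rfl⟩
    | zero => simp
    | add x y _ _ hx hy => rw [add_mul]; exact Ideal.add_mem _ hx hy
    | smul a x _ hx => rw [smul_eq_mul, mul_assoc]; exact Ideal.mul_mem_left _ _ hx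

lemma filt_wreg (d : ℕ) (F' : Set (Finset (Fin n))) (hF' : IsUpperSet F') (k : ℕ) :
    ∀ F : Set (Finset (Fin n)), IsUpperSet F → F ⊆ F' → (F' \ F).ncard = k →
    (∀ T ∈ F' \ F, d ≤ T.card) →
    RingTheory.Sequence.IsWeaklyRegular
      (idealQuot (Ideal.span (sqMon K '' F')) (Ideal.span (sqMon K '' F))) (esList K n d) := by
  induction k with
  | zero =>
    intro F hF hFF' hk hd
    have : F' \ F = ∅ := (Set.ncard_eq_zero (Set.toFinite _)).1 hk
    have h : F' = F := Set.Subset.antisymm (Set.sdiff_eq_empty.1 this) hFF'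
    subst h
    have hs : Subsingleton (idealQuot (Ideal.span (sqMon K '' F')) (Ideal.span (sqMon K '' F'))) := by
      rw [Submodule.Quotient.subsingleton_iff, eq_top_iff]
      intro x _
      exact x.2
    constructor
    intro i hi
    rw [isSMulRegular_quotient_iff_mem_of_smul_mem]
    intro x _
    rw [Subsingleton.elim x 0]; exact zero_mem _
  | succ k ih =>
    intro F hF hFF' hk hd
    have hne : (F' \ F).Nonempty := Set.nonempty_of_ncard_ne_zero (by omega)
    obtain ⟨T, hT⟩ := (Set.toFinite (F' \ F)).exists_maximal hne
    have hTm : T ∈ F' \ F := hT.1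
    have hmax : ∀ B, T ⊂ B → B ∈ F := by
      intro B hB
      by_contra hBF
      exact hB.2 (hT.2 ⟨hF' hB.1 hTm.1, hBF⟩ hB.1)
    have hmax' : ∀ j ∉ T, insert j T ∈ F := fun j hj => hmax _ (Finset.ssubset_insert hj)
    have hF1 : IsUpperSet (insert T F) := by
      rintro A B hAB (rfl | hA)
      · rcases eq_or_ssubset_of_subset hAB with rfl | h
        · exact Set.mem_insert _ _
        · exact Set.mem_insert_of_mem _ (hmax _ h)
      · exact Set.mem_insert_of_mem _ (hF hAB hA)
    have hsub : insert T F ⊆ F' := Set.insert_subset hTm.1 hFF'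
    have hd1 : F' \ insert T F = (F' \ F) \ {T} := by
      ext A; simp; tauto
    have hC := ih (insert T F) hF1 hsub (by
      rw [hd1, Set.ncard_sdiff_singleton_of_mem hTm]; omega)
      (fun A hA => hd A (by rw [hd1] at hA; exact hA.1))
    have hA := esList_wreg (K := K) T d (hd T hTm)
    have hTI : sqMon K T ∈ Ideal.span (sqMon K '' F') := Ideal.subset_span ⟨T, hTm.1, rfl⟩
    set I := Ideal.span (sqMon K '' F')
    set J := Ideal.span (sqMon K '' F) with hJ
    set J1 := Ideal.span (sqMon K '' (insert T F)) with hJ1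
    have hJ1' : J1 = Ideal.span {sqMon K T} ⊔ J := by
      rw [hJ1, Set.image_insert_eq, Ideal.span_insert]
    have hcol : ∀ a, a * sqMon K T ∈ J ↔ a ∈ qId K T 0 := colon_eq hF hTm.2 hmax'
    let f0 : MvPolynomial (Fin n) K →ₗ[MvPolynomial (Fin n) K] idealQuot I J :=
      LinearMap.toSpanSingleton _ _ (Submodule.Quotient.mk ⟨sqMon K T, hTI⟩)
    have hf0 : ∀ a (h : a * sqMon K T ∈ I), f0 a = Submodule.Quotient.mk ⟨a * sqMon K T, h⟩ := by
      intro a h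
      rfl
    have hker : LinearMap.ker f0 = qId K T 0 := by
      ext a
      rw [LinearMap.mem_ker, hf0 a (Ideal.mul_mem_left _ _ hTI), Submodule.Quotient.mk_eq_zero, ← hcol]
      rfl
    let f := Submodule.liftQ (qId K T 0) f0 hker.ge
    have hle : Submodule.comap I.subtype J ≤ Submodule.comap LinearMap.id (Submodule.comap I.subtype J1) := by
      intro x hx
      change (x : MvPolynomial (Fin n) K) ∈ J1
      rw [hJ1']
      exact Ideal.mem_sup_right hx
    let g : idealQuot I J →ₗ[MvPolynomial (Fin n) K] idealQuot I J1 := Submodule.mapQ _ _ LinearMap.id hle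
    refine wreg_ses _ _ _ _ f g ?_ ?_ ?_ hA hC
    · exact LinearMap.ker_eq_bot.1 (Submodule.ker_liftQ_eq_bot _ _ _ hker.le)
    · intro y
      obtain ⟨u, rfl⟩ := Submodule.Quotient.mk_surjective _ y
      have hg : g (Submodule.Quotient.mk u) = Submodule.Quotient.mk u := rfl
      rw [hg, Submodule.Quotient.mk_eq_zero]
      change (u : MvPolynomial (Fin n) K) ∈ J1 ↔ _
      constructor
      · intro hu
        rw [hJ1'] at hu
        obtain ⟨p, hp, q, hq, e⟩ := Submodule.mem_sup.1 hu
        obtain ⟨a, rfl⟩ := Ideal.mem_span_singleton'.1 hp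
        refine ⟨Submodule.Quotient.mk a, ?_⟩
        change f0 a = _
        rw [hf0 a (Ideal.mul_mem_left _ _ hTI), eq_comm, Submodule.Quotient.eq]
        change (u : MvPolynomial (Fin n) K) - a * sqMon K T ∈ J
        rw [← e]; simpa using hq
      · rintro ⟨z, hz⟩
        obtain ⟨a, rfl⟩ := Submodule.Quotient.mk_surjective _ z
        change f0 a = _ at hz
        rw [hf0 a (Ideal.mul_mem_left _ _ hTI), eq_comm, Submodule.Quotient.eq] at hz
        change (u : MvPolynomial (Fin n) K) - a * sqMon K T ∈ J at hz
        rw [hJ1']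
        have := Ideal.add_mem _ (Ideal.mem_sup_right (S := Ideal.span {sqMon K T}) hz) (Ideal.mem_sup_left (T := J) (Ideal.mem_span_singleton'.2 ⟨a, rfl⟩))
        simpa using this
    · intro y
      obtain ⟨u, rfl⟩ := Submodule.Quotient.mk_surjective _ y
      exact ⟨Submodule.Quotient.mk u, rfl⟩

end

section
variable {K : Type} [Field K] {n : ℕ}

lemma maxGraded_eq : maxGraded K n = idealOfVars (Fin n) K := rfl

lemma sqMon_mem_pow (T : Finset (Fin n)) : sqMon K T ∈ maxGraded K n ^ T.card := by
  unfold sqMon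
  rw [← Finset.prod_const]
  exact Ideal.prod_mem_prod fun i _ => Ideal.subset_span ⟨i, rfl⟩

lemma mem_pow_of_mk_mem {I J : Ideal (MvPolynomial (Fin n) K)} {d : ℕ}
    (hI : I ≤ maxGraded K n ^ d) (hJ : J ≤ maxGraded K n ^ (d + 1)) (u : I)
    (h : (Submodule.Quotient.mk u : idealQuot I J) ∈ maxGraded K n •
      (⊤ : Submodule (MvPolynomial (Fin n) K) (idealQuot I J))) :
    (u : MvPolynomial (Fin n) K) ∈ maxGraded K n ^ (d + 1) := by
  have e : (⊤ : Submodule (MvPolynomial (Fin n) K) (idealQuot I J)) =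
      Submodule.map (Submodule.mkQ _) ⊤ := by
    rw [Submodule.map_top, Submodule.range_mkQ]
  rw [e, ← Submodule.map_smul''] at h
  obtain ⟨v, hv, hvu⟩ := h
  rw [Submodule.mkQ_apply, Submodule.Quotient.eq] at hvu
  have h1 : (v : MvPolynomial (Fin n) K) - u ∈ J := hvu
  have h2 : (v : MvPolynomial (Fin n) K) ∈ maxGraded K n ^ (d + 1) := by
    have : I.subtype v ∈ Submodule.map I.subtype (maxGraded K n • ⊤) := ⟨v, hv, rfl⟩
    rw [Submodule.map_smul'', Submodule.map_top, Submodule.range_subtype] at this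
    rw [pow_succ']
    exact Ideal.mul_mono_right hI this
  have := Ideal.sub_mem _ h2 (hJ h1)
  simpa using this

lemma C_mul_sqMon_notMem (T : Finset (Fin n)) (c : K) (hc : c ≠ 0) :
    C c * sqMon K T ∉ maxGraded K n ^ (T.card + 1) := by
  intro h
  rw [maxGraded_eq, mem_pow_idealOfVars_iff'] at h
  have := h (∑ i ∈ T, Finsupp.single i 1) (by simp)
  rw [sqMon_eq, coeff_C_mul, coeff_monomial, if_pos rfl, mul_one] at this
  exact hc this

end

/-- Theorem 2.2, the main theorem. -/
theorem stmt_11 (n : ℕ) (K : Type) [Field K] (d : ℕ) (hd : 0 < d)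
    (I J : Ideal (MvPolynomial (Fin n) K)) (hJ0 : J ≠ ⊥) (hJI : J < I)
    (r : ℕ) (hr : 0 < r) (f : Fin r → Finset (Fin n)) (hfinj : Function.Injective f)
    (hfd : ∀ i, (f i).card = d)
    (hIgen : I = Ideal.span (Set.range fun i => sqMon K (f i)))
    (hJgen : GenBySqMonOfDeg K (fun k => k = d + 1) J)
    (hrs : rho K (d + 1) I - rho K (d + 1) J < r) :
    moduleDepth (maxGraded K n) (idealQuot I J) = (d : ℕ∞) := by
  classical
  obtain ⟨G, hG, hJG⟩ := hJgen
  have hIG : I = Ideal.span (sqMon K '' Set.range f) := by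
    rw [hIgen, ← Set.range_comp]; rfl
  have hfI : ∀ i, sqMon K (f i) ∈ I := fun i => by
    rw [hIgen]; exact Ideal.subset_span ⟨i, rfl⟩
  have hIm : I ≤ maxGraded K n ^ d := by
    rw [hIgen, Ideal.span_le]
    rintro _ ⟨i, rfl⟩
    have := sqMon_mem_pow (K := K) (f i)
    rwa [hfd] at this
  have hJm : J ≤ maxGraded K n ^ (d + 1) := by
    rw [hJG, Ideal.span_le]
    rintro _ ⟨T, hT, rfl⟩
    have := sqMon_mem_pow (K := K) T
    rwa [hG T hT] at this
  have key : ∀ i (c : K), c ≠ 0 → ((C c : MvPolynomial (Fin n) K) • (Submodule.Quotient.mk (⟨sqMon K (f i), hfI i⟩ : I) : idealQuot I J)) ∉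
      maxGraded K n • (⊤ : Submodule (MvPolynomial (Fin n) K) (idealQuot I J)) := by
    intro i c hc h
    rw [← Submodule.Quotient.mk_smul] at h
    have := mem_pow_of_mk_mem hIm hJm _ h
    have h2 := C_mul_sqMon_notMem (f i) c hc
    rw [hfd] at h2
    exact h2 this
  apply le_antisymm
  · refine sSup_le ?_
    rintro _ ⟨rs, rfl, hrsm, hreg⟩
    let W : Set (Finset (Fin n)) := {T | T.card = d + 1 ∧ sqMon K T ∈ I} \ {T | T.card = d + 1 ∧ sqMon K T ∈ J}
    have hW : W.ncard < r := by
      have hss : {T : Finset (Fin n) | T.card = d + 1 ∧ sqMon K T ∈ J} ⊆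
          {T : Finset (Fin n) | T.card = d + 1 ∧ sqMon K T ∈ I} :=
        fun T hT => ⟨hT.1, hJI.le hT.2⟩
      rw [Set.ncard_sdiff hss (Set.toFinite _)]
      exact hrs
    let gL : (Fin r → K) →ₗ[K] (Finset (Fin n) → K) :=
      ∑ i, (LinearMap.single K (fun _ => K) (f i)) ∘ₗ LinearMap.proj i
    have gL_apply : ∀ c A, gL c A = ∑ i, if A = f i then c i else 0 := by
      intro c A
      simp [gL, Pi.single_apply]
    let L : (Fin r → K) →ₗ[K] (W → K) :=
      LinearMap.pi fun B => ∑ j ∈ B.1, ((ksgn j B.1 : ℤ) : K) • (LinearMap.proj (B.1.erase j) ∘ₗ gL)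
    have hL : LinearMap.ker L ≠ ⊥ := by
      apply LinearMap.ker_ne_bot_of_finrank_lt
      rw [Module.finrank_fintype_fun_eq_card, Module.finrank_fintype_fun_eq_card, Fintype.card_fin,
        ← Nat.card_eq_fintype_card]
      exact hW
    obtain ⟨c, hc, hc0⟩ := Submodule.exists_mem_ne_zero_of_ne_bot hL
    obtain ⟨i0, hi0⟩ := Function.ne_iff.1 hc0
    have hg1 : ∀ i, gL c (f i) = c i := by
      intro i
      rw [gL_apply]
      simp [hfinj.eq_iff]
    have hg2 : ∀ A, (∀ i, A ≠ f i) → gL c A = 0 := by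
      intro A hA
      rw [gL_apply]
      exact Finset.sum_eq_zero fun i _ => if_neg (hA i)
    have hg3 : ∀ A, A.card ≠ d → gL c A = 0 := fun A hA => hg2 A fun i hi => hA (hi ▸ hfd i)
    have hg4 : ∀ A, sqMon K A ∉ I → gL c A = 0 := fun A hA => hg2 A fun i hi => hA (hi ▸ hfI i)
    have hker : ∀ B ∈ W, ∑ j ∈ B, ((ksgn j B : ℤ) : K) * gL c (B.erase j) = 0 := by
      intro B hB
      have := congrFun (LinearMap.mem_ker.1 hc) ⟨B, hB⟩
      simpa [L] using this
    let φ : Finset (Fin n) → idealQuot I J := fun A =>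
      if h : sqMon K A ∈ I then (C (gL c A) : MvPolynomial (Fin n) K) • (Submodule.Quotient.mk (⟨sqMon K A, h⟩ : I) : idealQuot I J) else 0
    have hφ0 : ∀ A, gL c A = 0 → φ A = 0 := by
      intro A hA
      simp only [φ]
      split_ifs
      · rw [hA, map_zero, zero_smul]
      · rfl
    have hsupp : ∀ A, A.card ≠ d → φ A = 0 := fun A hA => hφ0 A (hg3 A hA)
    have hXs : ∀ (B : Finset (Fin n)), ∀ j ∈ B, X j * sqMon K (B.erase j) = sqMon K B := by
      intro B j hj
      rw [X_mul_sqMon (Finset.notMem_erase j B), Finset.insert_erase hj]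
    have hcyc : kD (X : Fin n → MvPolynomial (Fin n) K) φ = 0 := by
      funext B
      rw [Pi.zero_apply, kD]
      by_cases hBc : B.card = d + 1
      swap
      · refine Finset.sum_eq_zero fun j hj => ?_
        rw [hsupp, smul_zero, smul_zero]
        rw [Finset.card_erase_of_mem hj]
        have := Finset.card_pos.2 ⟨j, hj⟩
        omega
      by_cases hBI : sqMon K B ∈ I
      swap
      · refine Finset.sum_eq_zero fun j hj => ?_
        rw [hφ0, smul_zero, smul_zero]
        apply hg4
        intro h
        apply hBI
        rw [← hXs B j hj]
        exact Ideal.mul_mem_left _ _ h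
      have : ∀ j ∈ B, ksgn j B • (X j : MvPolynomial (Fin n) K) • φ (B.erase j) =
          (C (((ksgn j B : ℤ) : K) * gL c (B.erase j)) : MvPolynomial (Fin n) K) •
            (Submodule.Quotient.mk ⟨sqMon K B, hBI⟩ : idealQuot I J) := by
        intro j hj
        by_cases h : sqMon K (B.erase j) ∈ I
        · have h1 : φ (B.erase j) = (C (gL c (B.erase j)) : MvPolynomial (Fin n) K) • (Submodule.Quotient.mk (⟨_, h⟩ : I) : idealQuot I J) := by
            simp only [φ]; rw [dif_pos h]
          rw [h1, smul_comm (X j : MvPolynomial (Fin n) K), ← Submodule.Quotient.mk_smul,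
            map_mul, mul_smul, map_intCast, Int.cast_smul_eq_zsmul]
          congr 4
          exact Subtype.ext (hXs B j hj)
        · rw [hg4 _ h, hφ0 _ (hg4 _ h)]; simp
      rw [Finset.sum_congr rfl this, ← Finset.sum_smul, ← map_sum]
      by_cases hBJ : sqMon K B ∈ J
      · have : (Submodule.Quotient.mk ⟨sqMon K B, hBI⟩ : idealQuot I J) = 0 := by
          rw [Submodule.Quotient.mk_eq_zero]; exact hBJ
        rw [this, smul_zero]
      · rw [hker B ⟨⟨hBc, hBI⟩, fun h => hBJ h.2⟩, map_zero, zero_smul]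
    have hnb : ¬ ∃ ζ, kD (X : Fin n → MvPolynomial (Fin n) K) ζ = φ := by
      rintro ⟨ζ, hζ⟩
      apply key i0 (c i0) hi0
      have h1 : φ (f i0) = (C (c i0) : MvPolynomial (Fin n) K) • (Submodule.Quotient.mk (⟨_, hfI i0⟩ : I) : idealQuot I J) := by
        simp only [φ]; rw [dif_pos (hfI i0), hg1]
      rw [← h1, ← hζ, kD]
      refine Submodule.sum_mem _ fun j _ => ?_
      have hj : (X j : MvPolynomial (Fin n) K) ∈ maxGraded K n := Ideal.subset_span ⟨j, rfl⟩
      exact zsmul_mem (Submodule.smul_mem_smul hj Submodule.mem_top) _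
    have := length_le_of_koszul _ rs _ d φ hsupp hcyc hnb hrsm hreg.toIsWeaklyRegular
    exact_mod_cast this
  · have hmem : ∀ p ∈ esList K n d, p ∈ maxGraded K n := by
      intro p hp
      obtain ⟨k, -, rfl⟩ := List.mem_map.1 hp
      unfold esymm
      refine Ideal.sum_mem _ fun A hA => ?_
      obtain ⟨j, hj⟩ : A.Nonempty := Finset.card_pos.1 (by
        rw [(Finset.mem_powersetCard.1 hA).2]; omega)
      exact Ideal.mem_of_dvd _ (Finset.dvd_prod_of_mem _ hj) (Ideal.subset_span ⟨j, rfl⟩)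
    refine le_sSup ⟨esList K n d, by simp [esList], hmem, ?_, ?_⟩
    · let FI : Set (Finset (Fin n)) := {T | sqMon K T ∈ I}
      let FJ : Set (Finset (Fin n)) := {T | sqMon K T ∈ J}
      have hup : ∀ L : Ideal (MvPolynomial (Fin n) K), IsUpperSet {T : Finset (Fin n) | sqMon K T ∈ L} := by
        intro L A B hAB hA
        exact Ideal.mem_of_dvd _ (Finset.prod_dvd_prod_of_subset _ _ _ hAB) hA
      have hgen : ∀ (L : Ideal (MvPolynomial (Fin n) K)) (H : Set (Finset (Fin n))),
          L = Ideal.span (sqMon K '' H) → L = Ideal.span (sqMon K '' {T | sqMon K T ∈ L}) := by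
        intro L H hL
        apply le_antisymm
        · conv_lhs => rw [hL]
          refine Ideal.span_mono (Set.image_mono fun T hT => ?_)
          change sqMon K T ∈ L
          rw [hL]
          exact Ideal.subset_span ⟨T, hT, rfl⟩
        · rw [Ideal.span_le]
          rintro _ ⟨T, hT, rfl⟩
          exact hT
      have e1 := hgen I _ hIG
      have e2 := hgen J _ hJG
      have := filt_wreg (K := K) d FI (hup I) _ FJ (hup J) (fun T hT => hJI.le hT) rfl (by
        intro T hT
        have h1 : sqMon K T ∈ I := hT.1
        rw [hIG, sqMon_mem_sqSpan] at h1
        obtain ⟨_, ⟨i, rfl⟩, hi⟩ := h1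
        rw [← hfd i]
        exact Finset.card_le_card hi)
      rw [← e1, ← e2] at this
      exact this
    · intro htop
      apply key ⟨0, hr⟩ 1 one_ne_zero
      have hle : Ideal.ofList (esList K n d) ≤ maxGraded K n := Ideal.span_le.2 hmem
      refine Submodule.smul_mono_left hle ?_
      rw [← htop]
      trivial
end

section
/- Let d be a positive integer, I an ideal of S generated by square-free monomials of degree ≥ d, and let x_n f_1,…,x_n f_r (r > 0) be the square-free monomials of degree d in I ∩ (x_n). Set U = (f_1,…,f_r) ⊆ S' and V = I ∩ S'. If r > ρ_d(U) − ρ_d(U ∩ V), then depth_S (S/I) = depth_{S'} ((U+V)/V) = d − 1. -/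
open MvPolynomial

namespace Ksz

open scoped Pointwise

/-- the Koszul sign -/
def sg {N : ℕ} (i : Fin N) (T : Finset (Fin N)) : ℤ := (-1) ^ (T.filter (· < i)).card

theorem sg_sq {N : ℕ} (i : Fin N) (T : Finset (Fin N)) : sg i T * sg i T = 1 := by
  unfold sg; rw [← mul_pow]; simp

theorem sg_insert {N : ℕ} (i j : Fin N) (T : Finset (Fin N)) (h : j ∉ T) :
    sg i (insert j T) = if j < i then - sg i T else sg i T := by
  unfold sg
  rw [Finset.filter_insert]
  split_ifs with h1
  · rw [Finset.card_insert_of_notMem (by simp [h]), pow_succ]; ring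
  · rfl

theorem sg_erase {N : ℕ} (i j : Fin N) (T : Finset (Fin N)) (h : j ∈ T) :
    sg i (T.erase j) = if j < i then - sg i T else sg i T := by
  have := sg_insert i j (T.erase j) (by simp)
  rw [Finset.insert_erase h] at this
  rw [this]; split_ifs <;> simp

variable {N : ℕ} {M : Type} [AddCommGroup M]

def eps (i : Fin N) (c : Finset (Fin N) → M) : Finset (Fin N) → M :=
  fun T => if i ∈ T then sg i T • c (T.erase i) else 0

def iot (i : Fin N) (c : Finset (Fin N) → M) : Finset (Fin N) → M :=
  fun T => if i ∈ T then 0 else sg i T • c (insert i T)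

theorem eps_eps (i j : Fin N) (c : Finset (Fin N) → M) (T : Finset (Fin N)) :
    eps i (eps j c) T + eps j (eps i c) T = 0 := by
  unfold eps
  by_cases hij : i = j
  · subst hij; simp
  by_cases hi : i ∈ T <;> by_cases hj : j ∈ T <;> simp [hi, hj, hij, Ne.symm hij]
  rw [sg_erase j i T hi, sg_erase i j T hj, Finset.erase_right_comm, smul_smul, smul_smul, ← add_smul]
  rcases lt_or_gt_of_ne hij with h | h
  · rw [if_pos h, if_neg (not_lt.2 h.le)]
    rw [show sg i T * -sg j T + sg j T * sg i T = 0 by ring, zero_smul]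
  · rw [if_pos h, if_neg (not_lt.2 h.le)]
    rw [show sg i T * sg j T + sg j T * -sg i T = 0 by ring, zero_smul]

theorem iot_eps (i j : Fin N) (hij : i ≠ j) (c : Finset (Fin N) → M) (T : Finset (Fin N)) :
    iot i (eps j c) T + eps j (iot i c) T = 0 := by
  unfold eps iot
  by_cases hi : i ∈ T <;> by_cases hj : j ∈ T <;> simp [hi, hj, hij, Ne.symm hij]
  rw [sg_insert j i T hi, sg_erase i j T hj, Finset.erase_insert_of_ne hij,
    smul_smul, smul_smul, ← add_smul]
  rcases lt_or_gt_of_ne hij with h | h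
  · rw [if_pos h, if_neg (not_lt.2 h.le)]
    rw [show sg i T * -sg j T + sg j T * sg i T = 0 by ring, zero_smul]
  · rw [if_pos h, if_neg (not_lt.2 h.le)]
    rw [show sg i T * sg j T + sg j T * -sg i T = 0 by ring, zero_smul]

theorem iot_eps_self (i : Fin N) (c : Finset (Fin N) → M) (T : Finset (Fin N)) :
    iot i (eps i c) T = if i ∈ T then 0 else c T := by
  unfold eps iot
  by_cases hi : i ∈ T
  · simp [hi]
  · simp only [hi, if_false, Finset.mem_insert_self, if_true, Finset.erase_insert hi]
    rw [sg_insert i i T hi, if_neg (lt_irrefl _), smul_smul, sg_sq, one_smul]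

theorem eps_iot_self (i : Fin N) (c : Finset (Fin N) → M) (T : Finset (Fin N)) :
    eps i (iot i c) T = if i ∈ T then c T else 0 := by
  unfold eps iot
  by_cases hi : i ∈ T
  · simp only [hi, if_true, Finset.notMem_erase, if_false, Finset.insert_erase hi]
    rw [sg_erase i i T hi, if_neg (lt_irrefl _), smul_smul, sg_sq, one_smul]
  · simp [hi]

variable {R : Type} [CommRing R] [Module R M]

/-- Koszul differential -/
def dif (x : Fin N → R) (c : Finset (Fin N) → M) : Finset (Fin N) → M :=
  fun T => ∑ i, x i • eps i c T

/-- contraction -/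
def ctr (a : Fin N → R) (c : Finset (Fin N) → M) : Finset (Fin N) → M :=
  fun T => ∑ i, a i • iot i c T

theorem eps_map {M' : Type} [AddCommGroup M'] (φ : M →+ M') (i : Fin N) (c : Finset (Fin N) → M)
    (T) : eps i (fun T => φ (c T)) T = φ (eps i c T) := by
  unfold eps; split_ifs <;> simp

theorem iot_map {M' : Type} [AddCommGroup M'] (φ : M →+ M') (i : Fin N) (c : Finset (Fin N) → M)
    (T) : iot i (fun T => φ (c T)) T = φ (iot i c T) := by
  unfold iot; split_ifs <;> simp

theorem dif_map {M' : Type} [AddCommGroup M'] [Module R M'] (φ : M →ₗ[R] M') (x : Fin N → R)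
    (c : Finset (Fin N) → M) (T) : dif x (fun T => φ (c T)) T = φ (dif x c T) := by
  unfold dif
  rw [map_sum]
  refine Finset.sum_congr rfl fun i _ => ?_
  rw [map_smul]
  congr 1
  exact eps_map φ.toAddMonoidHom i c T

theorem eps_add (i : Fin N) (c c' : Finset (Fin N) → M) (T) :
    eps i (fun T => c T + c' T) T = eps i c T + eps i c' T := by
  unfold eps; split_ifs <;> simp

theorem dif_add (x : Fin N → R) (c c' : Finset (Fin N) → M) (T) :
    dif x (fun T => c T + c' T) T = dif x c T + dif x c' T := by
  simp only [dif, eps_add, smul_add, Finset.sum_add_distrib]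

theorem dif_smul (x : Fin N → R) (r : R) (c : Finset (Fin N) → M) (T) :
    dif x (fun T => r • c T) T = r • dif x c T := by
  simpa using dif_map (LinearMap.lsmul R M r) x c T

theorem dif_neg (x : Fin N → R) (c : Finset (Fin N) → M) (T) :
    dif x (fun T => - c T) T = - dif x c T := by
  simpa using dif_smul x (-1) c T

theorem dif_sub (x : Fin N → R) (c c' : Finset (Fin N) → M) (T) :
    dif x (fun T => c T - c' T) T = dif x c T - dif x c' T := by
  simp only [sub_eq_add_neg, dif_add, dif_neg]

theorem dif_zero (x : Fin N → R) (T) : dif x (fun _ => (0 : M)) T = 0 := by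
  simpa using dif_smul x (0:R) (fun _ => (0:M)) T

theorem eps_dif (x : Fin N → R) (c : Finset (Fin N) → M) (i T) :
    eps i (dif x c) T = ∑ j, x j • eps i (eps j c) T := by
  unfold dif
  simp only [eps]
  split_ifs
  · rw [Finset.smul_sum]
    exact Finset.sum_congr rfl fun j _ => smul_comm _ _ _
  · simp

theorem iot_dif (x : Fin N → R) (c : Finset (Fin N) → M) (i T) :
    iot i (dif x c) T = ∑ j, x j • iot i (eps j c) T := by
  unfold dif
  simp only [iot]
  split_ifs
  · simp
  · rw [Finset.smul_sum]
    exact Finset.sum_congr rfl fun j _ => smul_comm _ _ _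

theorem eps_ctr (a : Fin N → R) (c : Finset (Fin N) → M) (i T) :
    eps i (ctr a c) T = ∑ j, a j • eps i (iot j c) T := by
  unfold ctr
  simp only [eps]
  split_ifs
  · rw [Finset.smul_sum]
    exact Finset.sum_congr rfl fun j _ => smul_comm _ _ _
  · simp

theorem eps_eps_self (i : Fin N) (c : Finset (Fin N) → M) (T) : eps i (eps i c) T = 0 := by
  unfold eps; simp

theorem dif_dif (x : Fin N → R) (c : Finset (Fin N) → M) (T) : dif x (dif x c) T = 0 := by
  have h1 : dif x (dif x c) T = ∑ p : Fin N × Fin N, (x p.1 * x p.2) • eps p.1 (eps p.2 c) T := by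
    rw [Fintype.sum_prod_type]
    conv_lhs => unfold dif
    refine Finset.sum_congr rfl fun i _ => ?_
    have := eps_dif x c i T
    unfold dif at this
    rw [this, Finset.smul_sum]
    exact Finset.sum_congr rfl fun j _ => smul_smul _ _ _
  rw [h1]
  refine Finset.sum_involution (fun p _ => (p.2, p.1)) ?_ ?_ ?_ ?_
  · rintro ⟨i, j⟩ _
    simp only
    rw [mul_comm (x j), ← smul_add, eps_eps, smul_zero]
  · rintro ⟨i, j⟩ _ h h'
    simp only [Prod.mk.injEq] at h'
    obtain ⟨h', -⟩ := h'
    subst h'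
    simp [eps_eps_self] at h
  · simp
  · simp

theorem cartan (x a : Fin N → R) (c : Finset (Fin N) → M) (T) :
    dif x (ctr a c) T + ctr a (dif x c) T = (∑ i, a i * x i) • c T := by
  have h1 : dif x (ctr a c) T = ∑ i, ∑ j, (a i * x j) • eps j (iot i c) T := by
    rw [Finset.sum_comm]
    conv_lhs => unfold dif
    refine Finset.sum_congr rfl fun i _ => ?_
    rw [eps_ctr, Finset.smul_sum]
    exact Finset.sum_congr rfl fun j _ => by rw [smul_smul, mul_comm]
  have h2 : ctr a (dif x c) T = ∑ i, ∑ j, (a i * x j) • iot i (eps j c) T := by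
    conv_lhs => unfold ctr
    refine Finset.sum_congr rfl fun i _ => ?_
    rw [iot_dif, Finset.smul_sum]
    exact Finset.sum_congr rfl fun j _ => by rw [smul_smul]
  rw [h1, h2, ← Finset.sum_add_distrib, Finset.sum_smul]
  refine Finset.sum_congr rfl fun i _ => ?_
  rw [← Finset.sum_add_distrib, Finset.sum_eq_single i]
  · rw [← smul_add, eps_iot_self, iot_eps_self]
    split_ifs <;> simp
  · intro j _ hj
    rw [← smul_add, add_comm, iot_eps i j (Ne.symm hj), smul_zero]
  · simp

/-- `c` is homogeneous of cohomological degree `p` -/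
def Hg (p : ℕ) (c : Finset (Fin N) → M) : Prop := ∀ T, T.card ≠ p → c T = 0

theorem Hg.dif {x : Fin N → R} {p : ℕ} {c : Finset (Fin N) → M} (h : Hg p c) :
    Hg (p + 1) (dif x c) := by
  intro T hT
  unfold Ksz.dif
  refine Finset.sum_eq_zero fun i _ => ?_
  unfold eps
  split_ifs with hi
  · rw [h, smul_zero, smul_zero]
    rw [Finset.card_erase_of_mem hi]
    have : 0 < T.card := Finset.card_pos.2 ⟨i, hi⟩
    omega
  · simp

theorem Hg.ctr {a : Fin N → R} {p : ℕ} {c : Finset (Fin N) → M} (h : Hg p c) (T)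
    (hT : T.card + 1 ≠ p) : ctr a c T = 0 := by
  unfold Ksz.ctr
  refine Finset.sum_eq_zero fun i _ => ?_
  unfold iot
  split_ifs with hi
  · simp
  · rw [h, smul_zero, smul_zero]
    rwa [Finset.card_insert_of_notMem hi]

/-- restrict to degree `p` -/
def rst (p : ℕ) (c : Finset (Fin N) → M) : Finset (Fin N) → M :=
  fun T => if T.card = p then c T else 0

theorem rst_hg (p : ℕ) (c : Finset (Fin N) → M) : Hg p (rst p c) := by
  intro T hT; simp [rst, hT]

theorem dif_rst (x : Fin N → R) (p : ℕ) (c : Finset (Fin N) → M) (T) (hT : T.card = p + 1) :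
    dif x (rst p c) T = dif x c T := by
  unfold dif
  refine Finset.sum_congr rfl fun i _ => ?_
  congr 1
  unfold eps rst
  split_ifs with h1 h2
  · rfl
  · rw [Finset.card_erase_of_mem h1] at h2; omega
  · rfl

/-- If `H^p ≠ 0`. -/
def NV (x : Fin N → R) (M : Type) [AddCommGroup M] [Module R M] (p : ℕ) : Prop :=
  ∃ z : Finset (Fin N) → M, Hg p z ∧ (∀ T, dif x z T = 0) ∧ ¬ ∃ u, ∀ T, dif x u T = z T

/-- `H^p = 0` for `p < k`. -/
def DD (x : Fin N → R) (M : Type) [AddCommGroup M] [Module R M] (k : ℕ) : Prop :=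
  ∀ p < k, ∀ z : Finset (Fin N) → M, Hg p z → (∀ T, dif x z T = 0) → ∃ u, ∀ T, dif x u T = z T

theorem mem_span_range (x : Fin N → R) (r : R) (hr : r ∈ Ideal.span (Set.range x)) :
    ∃ a : Fin N → R, r = ∑ i, a i * x i := by
  obtain ⟨a, ha⟩ := (Ideal.mem_span_range_iff_exists_fun).1 hr
  exact ⟨a, ha.symm⟩

theorem quot_zero (r : R) (m : M) :
    (Submodule.mkQ (r • (⊤ : Submodule R M)) m = 0) ↔ ∃ y, m = r • y := by
  rw [Submodule.mkQ_apply, Submodule.Quotient.mk_eq_zero, Submodule.mem_smul_pointwise_iff_exists]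
  constructor
  · rintro ⟨y, -, h⟩; exact ⟨y, h.symm⟩
  · rintro ⟨y, h⟩; exact ⟨y, trivial, h.symm⟩

theorem exists_lift {M' : Type} [AddCommGroup M'] [Module R M'] (φ : M →ₗ[R] M')
    (hφ : Function.Surjective φ) (u : Finset (Fin N) → M') :
    ∃ v : Finset (Fin N) → M, ∀ T, φ (v T) = u T := ⟨fun T => (hφ (u T)).choose,
      fun T => (hφ (u T)).choose_spec⟩

theorem exists_lift_hg {M' : Type} [AddCommGroup M'] [Module R M'] (φ : M →ₗ[R] M')
    (hφ : Function.Surjective φ) (p : ℕ) (u : Finset (Fin N) → M') (hu : Hg p u) :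
    ∃ v : Finset (Fin N) → M, Hg p v ∧ ∀ T, φ (v T) = u T := by
  obtain ⟨v, hv⟩ := exists_lift φ hφ u
  refine ⟨rst p v, rst_hg p v, fun T => ?_⟩
  unfold rst
  split_ifs with h
  · exact hv T
  · rw [map_zero, hu T h]

theorem NV.step (x : Fin N → R) (r : R) (hr : r ∈ Ideal.span (Set.range x))
    (hreg : IsSMulRegular M r) (p : ℕ) (h : NV x M p) :
    ∃ q, p = q + 1 ∧ NV x (QuotSMulTop r M) q := by
  obtain ⟨z, hz, hdz, hne⟩ := h
  obtain ⟨a, ha⟩ := mem_span_range x r hr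
  have hw : ∀ T, dif x (ctr a z) T = r • z T := by
    intro T
    have := cartan x a z T
    rw [← ha] at this
    rw [← this, left_eq_add]
    unfold ctr
    refine Finset.sum_eq_zero fun i _ => ?_
    unfold iot
    split_ifs <;> simp [hdz]
  rcases p with _ | q
  · exfalso
    apply hne
    refine ⟨fun _ => 0, fun T => ?_⟩
    rw [dif_zero]
    apply hreg
    change r • (0 : M) = r • z T
    rw [smul_zero, ← hw]
    have : ctr a z = fun _ => 0 := by
      ext T; exact hz.ctr T (by omega)
    rw [this, dif_zero]
  · refine ⟨q, rfl, fun T => Submodule.mkQ _ (ctr a z T), ?_, ?_, ?_⟩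
    · intro T hT
      change Submodule.mkQ _ (ctr a z T) = 0
      rw [hz.ctr T (by omega), map_zero]
    · intro T
      rw [dif_map, quot_zero]
      exact ⟨_, hw T⟩
    · rintro ⟨u, hu⟩
      obtain ⟨u', hu'⟩ := exists_lift (Submodule.mkQ (r • (⊤ : Submodule R M)))
        (Submodule.mkQ_surjective _) u
      have : u = fun T => Submodule.mkQ (r • (⊤ : Submodule R M)) (u' T) := by
        ext T; exact (hu' T).symm
      have h1 : ∀ T, ∃ v, ctr a z T - dif x u' T = r • v := by
        intro T
        rw [← quot_zero, map_sub, sub_eq_zero, ← dif_map, ← this, hu T]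
      choose v hv using h1
      apply hne
      refine ⟨v, fun T => hreg ?_⟩
      change r • _ = r • _
      rw [← hw, ← dif_smul]
      simp_rw [← hv]
      rw [dif_sub, dif_dif, sub_zero]

theorem NV.le (x : Fin N → R) : ∀ (rs : List R) (M : Type) [AddCommGroup M] [Module R M] (p : ℕ),
    (∀ r ∈ rs, r ∈ Ideal.span (Set.range x)) → RingTheory.Sequence.IsWeaklyRegular M rs →
    NV x M p → rs.length ≤ p
  | [], _, _, _, _, _, _, _ => Nat.zero_le _
  | r :: rs, M, _, _, p, hm, hreg, h => by
    rw [RingTheory.Sequence.isWeaklyRegular_cons_iff] at hreg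
    obtain ⟨q, rfl, hq⟩ := NV.step x r (hm r (by simp)) hreg.1 p h
    have := NV.le x rs (QuotSMulTop r M) q (fun s hs => hm s (by simp [hs])) hreg.2 hq
    simpa using this

theorem DD.step (x : Fin N → R) (r : R) 
    (hreg : IsSMulRegular M r) (k : ℕ) (h : DD x M (k + 1)) : DD x (QuotSMulTop r M) k := by
  intro p hp z hz hdz
  obtain ⟨z', hz', hzz⟩ := exists_lift_hg (Submodule.mkQ (r • (⊤ : Submodule R M)))
        (Submodule.mkQ_surjective _) p z hz
  have hzf : z = fun T => Submodule.mkQ (r • (⊤ : Submodule R M)) (z' T) := by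
        ext T; exact (hzz T).symm
  have h1 : ∀ T, ∃ y, dif x z' T = r • y := by
    intro T
    rw [← quot_zero, ← dif_map, ← hzf, hdz]
  choose y hy using h1
  have hyH : Hg (p + 1) y := by
    intro T hT
    apply hreg
    change r • _ = r • _
    rw [← hy, smul_zero]
    exact hz'.dif T hT
  have hdy : ∀ T, dif x y T = 0 := by
    intro T
    apply hreg
    change r • _ = r • _
    rw [← dif_smul, smul_zero]
    simp_rw [← hy]
    exact dif_dif _ _ _
  obtain ⟨u, hu⟩ := h (p + 1) (by omega) y hyH hdy
  have hu' : ∀ T, dif x (rst p u) T = y T := by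
    intro T
    by_cases hT : T.card = p + 1
    · rw [dif_rst _ _ _ _ hT, hu]
    · rw [(rst_hg p u).dif T hT, hyH T hT]
  obtain ⟨v, hv⟩ := h p (by omega) (fun T => z' T - r • rst p u T)
    (fun T hT => by beta_reduce; rw [hz' T hT, rst_hg p u T hT]; simp)
    (fun T => by rw [dif_sub, dif_smul, hu', hy, sub_self])
  refine ⟨fun T => Submodule.mkQ (r • (⊤ : Submodule R M)) (v T), fun T => ?_⟩
  rw [dif_map, hv, map_sub, (quot_zero r _).2 ⟨_, rfl⟩, sub_zero, hzz]

theorem DD.reg [IsNoetherianRing R] [Module.Finite R M] (x : Fin N → R)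
    (hmax : (Ideal.span (Set.range x)).IsMaximal) (k : ℕ)
    (h : DD x M (k + 1)) : ∃ r ∈ Ideal.span (Set.range x), IsSMulRegular M r := by
  have hM : ∀ m : M, (∀ i, x i • m = 0) → m = 0 := by
    intro m hm
    obtain ⟨u, hu⟩ := h 0 (by omega) (fun T => if T = ∅ then m else 0)
      (fun T hT => by simp at hT; simp [hT])
      (fun T => by
        unfold dif eps
        refine Finset.sum_eq_zero fun i _ => ?_
        split_ifs
        · rw [smul_comm]
          beta_reduce
          split_ifs
          · rw [hm, smul_zero]
          · simp
        all_goals simp)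
    have := hu ∅
    simp [dif, eps] at this
    exact this.symm
  by_contra! hcon
  have hsub : (Ideal.span (Set.range x) : Set R) ⊆ ⋃ p ∈ associatedPrimes R M, p := by
    rw [biUnion_associatedPrimes_eq_zero_divisors]
    intro r hr
    have := hcon r hr
    rw [isSMulRegular_iff_right_eq_zero_of_smul] at this
    push Not at this
    obtain ⟨m, h1, h2⟩ := this
    exact ⟨m, h2, h1⟩
  obtain ⟨P, hP, hle⟩ := (Ideal.subset_union_prime_finite (associatedPrimes.finite R M)
    (f := id) 0 0 (fun _ h _ _ => h.isPrime)).1 hsub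
  have hP' := AssociatedPrimes.mem_iff.1 hP
  have hEq := hmax.eq_of_le hP'.isPrime.ne_top hle
  obtain ⟨-, m, hm⟩ := isAssociatedPrime_iff.1 hP'
  have : m = 0 := hM m (fun i => by
    have : x i ∈ P := hle (Ideal.subset_span ⟨i, rfl⟩)
    rw [hm] at this
    simpa using this)
  apply hP'.isPrime.ne_top
  rw [hm, this]
  ext; simp

theorem DD.exists [IsNoetherianRing R] (x : Fin N → R)
    (hmax : (Ideal.span (Set.range x)).IsMaximal) : ∀ (k : ℕ) (M : Type) [AddCommGroup M]
    [Module R M] [Module.Finite R M] (_ : DD x M k), ∃ rs : List R, rs.length = k ∧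
      (∀ r ∈ rs, r ∈ Ideal.span (Set.range x)) ∧ RingTheory.Sequence.IsWeaklyRegular M rs
  | 0, M, _, _, _, _ => ⟨[], rfl, by simp, by simp⟩
  | k + 1, M, _, _, _, h => by
    obtain ⟨r, hr, hreg⟩ := DD.reg x hmax k h
    obtain ⟨rs, h1, h2, h3⟩ := DD.exists x hmax k (QuotSMulTop r M) (DD.step x r hreg k h)
    refine ⟨r :: rs, by simp [h1], ?_, ?_⟩
    · intro s hs
      rcases List.mem_cons.1 hs with rfl | hs
      · exact hr
      · exact h2 s hs
    · rw [RingTheory.Sequence.isWeaklyRegular_cons_iff]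
      exact ⟨hreg, h3⟩

theorem depth_eq {R : Type} [CommRing R] [IsNoetherianRing R] (x : Fin N → R)
    (hmax : (Ideal.span (Set.range x)).IsMaximal) (k : ℕ) (M : Type) [AddCommGroup M]
    [Module R M] [Module.Finite R M] (h1 : DD x M k) (h2 : NV x M k)
    (hne : (⊤ : Submodule R M) ≠ Ideal.span (Set.range x) • ⊤) :
    moduleDepth (Ideal.span (Set.range x)) M = (k : ℕ∞) := by
  unfold moduleDepth
  apply le_antisymm
  · apply sSup_le
    rintro _ ⟨rs, rfl, hm, hreg⟩
    exact_mod_cast NV.le x rs M k hm hreg.toIsWeaklyRegular h2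
  · obtain ⟨rs, h3, h4, h5⟩ := DD.exists x hmax k M h1
    apply le_sSup
    refine ⟨rs, by rw [h3], h4, h5, fun heq => hne ?_⟩
    apply le_antisymm _ le_top
    have hle : Ideal.ofList rs ≤ Ideal.span (Set.range x) := Ideal.span_le.2 h4
    exact heq.le.trans (Submodule.smul_mono_left hle)

end Ksz

namespace Ksz

section Poly

variable {N : ℕ} {K : Type} [Field K]

/-- the variables -/
noncomputable abbrev XX {N : ℕ} (K : Type) [Field K] : Fin N → MvPolynomial (Fin N) K := X

theorem dif_mem (A : Ideal (MvPolynomial (Fin N) K)) (x : Fin N → MvPolynomial (Fin N) K)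
    (c : Finset (Fin N) → MvPolynomial (Fin N) K) (h : ∀ T, c T ∈ A) (T) : dif x c T ∈ A := by
  unfold dif
  refine Ideal.sum_mem _ fun i _ => ?_
  rw [smul_eq_mul]
  refine Ideal.mul_mem_left _ _ ?_
  unfold eps
  split_ifs
  · exact zsmul_mem (h _) _
  · exact zero_mem _

/-- the exponent of a square-free monomial -/
noncomputable def ee (T : Finset (Fin N)) : Fin N →₀ ℕ := ∑ i ∈ T, Finsupp.single i 1

theorem ee_apply (T : Finset (Fin N)) (i) : ee T i = if i ∈ T then 1 else 0 := by
  unfold ee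
  rw [Finsupp.finsetSum_apply]
  simp [Finsupp.single_apply]

theorem ee_support (T : Finset (Fin N)) : (ee T).support = T := by
  ext i; simp [ee_apply]

theorem ee_inj {T T' : Finset (Fin N)} (h : ee T = ee T') : T = T' := by
  rw [← ee_support T, h, ee_support]

theorem ee_degree (T : Finset (Fin N)) : (ee T).degree = T.card := by
  unfold ee; simp [map_sum]

theorem ee_le (T : Finset (Fin N)) (b : Fin N →₀ ℕ) : ee T ≤ b ↔ T ⊆ b.support := by
  constructor
  · intro h i hi
    have := h i
    rw [ee_apply, if_pos hi] at this
    simp; omega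
  · intro h i
    rw [ee_apply]
    split_ifs with hi
    · have := h hi
      simp at this; omega
    · exact Nat.zero_le _

theorem sqMon_eq (T : Finset (Fin N)) : sqMon K T = monomial (ee T) 1 := by
  unfold sqMon ee
  rw [monomial_sum_one]
  rfl

def SqI (A : Ideal (MvPolynomial (Fin N) K)) (P : Finset (Fin N) → Prop) : Prop :=
  ∀ y, y ∈ A ↔ ∀ b ∈ y.support, P b.support

theorem SqI_span (G : Set (Finset (Fin N))) :
    SqI (Ideal.span (sqMon K '' G)) (fun s => ∃ T ∈ G, T ⊆ s) := by
  intro y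
  have : sqMon K '' G = (fun s => monomial s (1 : K)) '' (ee '' G) := by
    rw [Set.image_image]
    exact Set.image_congr fun T _ => sqMon_eq T
  rw [this, mem_ideal_span_monomial_image]
  simp [ee_le]

theorem SqI.mon {A : Ideal (MvPolynomial (Fin N) K)} {P} (h : SqI A P) (T) :
    sqMon K T ∈ A ↔ P T := by
  rw [h, sqMon_eq]
  classical
  simp [support_monomial, ee_support]

noncomputable def GG (i : Fin N) : MvPolynomial (Fin N) K →+ MvPolynomial (Fin N) K :=
  AddMonoidHom.mk' (fun y => X i * (divMonomial y (Finsupp.single i 2)))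
    (fun a b => by rw [add_divMonomial, mul_add])

theorem coeff_GG (i : Fin N) (y : MvPolynomial (Fin N) K) (b) :
    coeff b (GG i y) = if 1 ≤ b i then coeff (b + Finsupp.single i 1) y else 0 := by
  classical
  change coeff b (X i * (divMonomial y (Finsupp.single i 2))) = _
  rw [coeff_X_mul', coeff_divMonomial]
  by_cases h : 1 ≤ b i
  · rw [if_pos h, if_pos (by simp; omega)]
    congr 1
    ext j
    by_cases hj : j = i
    · subst hj; simp; omega
    · simp [hj, Finsupp.single_apply, Ne.symm hj]
  · rw [if_neg h, if_neg (by simp; omega)]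

theorem GG_mem {A : Ideal (MvPolynomial (Fin N) K)} {P} (h : SqI A P) (i : Fin N)
    (y) (hy : y ∈ A) : GG i y ∈ A := by
  rw [h] at hy ⊢
  intro b hb
  rw [mem_support_iff, coeff_GG] at hb
  split_ifs at hb with h1
  · have := hy _ (mem_support_iff.2 hb)
    convert this using 1
    ext j
    by_cases hj : j = i
    · subst hj; simp; omega
    · simp [hj, Finsupp.single_apply, Ne.symm hj]
  · exact absurd rfl hb

theorem X_mul_GG (i j : Fin N) (hij : j ≠ i) (y : MvPolynomial (Fin N) K) :
    X j * GG i y = GG i (X j * y) := by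
  classical
  ext b
  rw [coeff_X_mul', coeff_GG, coeff_GG, coeff_X_mul']
  by_cases hj : j ∈ b.support
  · have hj' : j ∈ (b + Finsupp.single i 1).support := by
      simp at hj ⊢; omega
    rw [if_pos hj, if_pos hj']
    have h1 : (b - Finsupp.single j 1 : Fin N →₀ ℕ) i = b i := by
      simp [hij]
    rw [h1]
    congr 2
    ext l
    simp at hj
    by_cases hl : l = j
    · subst hl; simp [Finsupp.single_apply, Ne.symm hij]
    · simp [Finsupp.single_apply, Ne.symm hl]
  · have hj' : j ∉ (b + Finsupp.single i 1).support := by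
      simp at hj ⊢; simp [hj, Finsupp.single_apply, Ne.symm hij]
    rw [if_neg hj, if_neg hj']; simp

theorem coeff_XGG (i : Fin N) (y : MvPolynomial (Fin N) K) (b) :
    coeff b (X i * GG i y) = if 1 < b i then coeff b y else 0 := by
  classical
  rw [coeff_X_mul', coeff_GG]
  by_cases h : 1 < b i
  · rw [if_pos h, if_pos (by simp; omega), if_pos (by simp; omega)]
    congr 1
    ext j
    by_cases hj : j = i
    · subst hj; simp; omega
    · simp [Finsupp.single_apply, Ne.symm hj]
  · rw [if_neg h]
    split_ifs with h1 h2
    · simp at h2; omega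
    · rfl
    · rfl

theorem coeff_GGX (i : Fin N) (y : MvPolynomial (Fin N) K) (b) :
    coeff b (GG i (X i * y)) = if 0 < b i then coeff b y else 0 := by
  rw [coeff_GG]
  rw [add_comm, coeff_X_mul]
  rfl

theorem htpy (i : Fin N) (c : Finset (Fin N) → MvPolynomial (Fin N) K) (T) (b) :
    coeff b (dif (XX K) (fun T => GG i (iot i c T)) T + GG i (iot i (dif (XX K) c) T)) =
      if (if i ∈ T then 1 else 0) < b i then coeff b (c T) else 0 := by
  have h1 : dif (XX K) (fun T => GG i (iot i c T)) T + GG i (iot i (dif (XX K) c) T) =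
      X i * GG i (eps i (iot i c) T) + GG i (X i * iot i (eps i c) T) := by
    rw [iot_dif, map_sum]
    unfold dif
    rw [← Finset.sum_add_distrib, Finset.sum_eq_single i]
    · rw [eps_map, smul_eq_mul, smul_eq_mul]
    · intro j _ hj
      rw [eps_map, smul_eq_mul, smul_eq_mul, X_mul_GG i j hj, ← map_add, ← mul_add, add_comm,
        iot_eps i j (Ne.symm hj), mul_zero, map_zero]
    · simp
  rw [h1, eps_iot_self, iot_eps_self, coeff_add, coeff_XGG, coeff_GGX]
  by_cases hi : i ∈ T
  · simp [hi]
  · simp [hi]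

theorem vanish_aux {A B : Ideal (MvPolynomial (Fin N) K)} {PA PB} (hA : SqI A PA) (hB : SqI B PB)
    (p : ℕ) (c : Finset (Fin N) → MvPolynomial (Fin N) K) (hc : Hg p c)
    (hcA : ∀ T, c T ∈ A) (hdc : ∀ T, dif (XX K) c T ∈ B) (s : Finset (Fin N)) :
    ∃ u w c' : Finset (Fin N) → MvPolynomial (Fin N) K, (∀ T, u T ∈ A) ∧ (∀ T, w T ∈ B) ∧
      (∀ T, c T = dif (XX K) u T + w T + c' T) ∧ Hg p c' ∧ (∀ T, c' T ∈ A) ∧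
      ∀ T, ∀ b ∈ (c' T).support, ∀ i ∈ s, b i ≤ if i ∈ T then 1 else 0 := by
  induction s using Finset.induction_on with
  | empty =>
    exact ⟨fun _ => 0, fun _ => 0, c, by simp, by simp, fun T => by simp [dif_zero], hc, hcA,
      by simp⟩
  | insert i s his ih =>
    obtain ⟨u, w, c', hu, hw, hceq, hc', hc'A, hs⟩ := ih
    have hdc' : ∀ T, dif (XX K) c' T ∈ B := by
      intro T
      have h1 : c' = fun T => c T - (dif (XX K) u T + w T) := by
        ext1 T; rw [hceq T]; ring
      rw [h1, dif_sub, dif_add]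
      have := dif_dif (XX K) u T
      rw [this, zero_add]
      exact sub_mem (hdc T) (dif_mem _ _ _ hw T)
    have hiot : ∀ (C : Ideal (MvPolynomial (Fin N) K)) (v : Finset (Fin N) → _),
        (∀ T, v T ∈ C) → ∀ T, iot i v T ∈ C := by
      intro C v hv T
      unfold iot
      split_ifs
      · exact zero_mem _
      · exact zsmul_mem (hv _) _
    have hco : ∀ T b, coeff b (c' T - (dif (XX K) (fun T => GG i (iot i c' T)) T +
        GG i (iot i (dif (XX K) c') T))) = if (if i ∈ T then 1 else 0) < b i then 0
          else coeff b (c' T) := by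
      intro T b
      rw [coeff_sub, htpy]
      by_cases hlt : (if i ∈ T then 1 else 0) < b i
      · rw [if_pos hlt, if_pos hlt, sub_self]
      · rw [if_neg hlt, if_neg hlt, sub_zero]
    refine ⟨fun T => u T + GG i (iot i c' T), fun T => w T + GG i (iot i (dif (XX K) c') T),
      fun T => c' T - (dif (XX K) (fun T => GG i (iot i c' T)) T + GG i (iot i (dif (XX K) c') T)),
      fun T => add_mem (hu T) (GG_mem hA i _ (hiot A c' hc'A T)),
      fun T => add_mem (hw T) (GG_mem hB i _ (hiot B _ hdc' T)), ?_, ?_, ?_, ?_⟩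
    · intro T
      rw [dif_add, hceq T]
      ring
    · intro T hT
      ext b
      beta_reduce
      rw [hco, hc' T hT]
      simp
    · intro T
      rw [hA]
      intro b hb
      rw [mem_support_iff, hco] at hb
      have hb2 : coeff b (c' T) ≠ 0 := fun h => hb (by rw [h, ite_self])
      exact (hA _).1 (hc'A T) b (mem_support_iff.2 hb2)
    · intro T b hb j hj
      rw [mem_support_iff, hco] at hb
      have hb2 : coeff b (c' T) ≠ 0 := fun h => hb (by rw [h, ite_self])
      rcases Finset.mem_insert.1 hj with rfl | hj
      · exact not_lt.1 fun h => hb (if_pos h)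
      · exact hs T b (mem_support_iff.2 hb2) j hj

theorem vanish {A B : Ideal (MvPolynomial (Fin N) K)} {PA PB} (hA : SqI A PA) (hB : SqI B PB)
    (k : ℕ) (hk : ∀ s, PA s → k ≤ s.card)
    (p : ℕ) (hp : p < k) (c : Finset (Fin N) → MvPolynomial (Fin N) K) (hc : Hg p c)
    (hcA : ∀ T, c T ∈ A) (hdc : ∀ T, dif (XX K) c T ∈ B) :
    ∃ u w : Finset (Fin N) → MvPolynomial (Fin N) K, (∀ T, u T ∈ A) ∧ (∀ T, w T ∈ B) ∧
      (∀ T, c T = dif (XX K) u T + w T) := by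
  obtain ⟨u, w, c', hu, hw, hceq, hc', hc'A, hs⟩ := vanish_aux hA hB p c hc hcA hdc Finset.univ
  refine ⟨u, w, hu, hw, fun T => ?_⟩
  have : c' T = 0 := by
    by_contra hne
    have hT : T.card = p := by
      by_contra h; exact hne (hc' T h)
    obtain ⟨b, hb⟩ := support_nonempty.2 hne
    have h1 := hk _ ((hA _).1 (hc'A T) b hb)
    have h2 : b.support ⊆ T := by
      intro i hi
      have := hs T b hb i (Finset.mem_univ _)
      by_contra h
      rw [if_neg h] at this
      simp at hi; omega
    have := Finset.card_le_card h2
    omega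
  rw [hceq T, this, add_zero]

theorem SqI_bot : SqI (⊥ : Ideal (MvPolynomial (Fin N) K)) (fun _ => False) := by
  intro y
  rw [Ideal.mem_bot]
  constructor
  · rintro rfl; simp
  · intro h
    by_contra hne
    obtain ⟨b, hb⟩ := support_nonempty.2 hne
    exact h b hb

theorem exactS (p : ℕ) (hp : p < N) (c : Finset (Fin N) → MvPolynomial (Fin N) K) (hc : Hg p c)
    (hdc : ∀ T, dif (XX K) c T = 0) :
    ∃ u : Finset (Fin N) → MvPolynomial (Fin N) K, ∀ T, c T = dif (XX K) u T := by
  have hA := SqI_span (K := K) ({Finset.univ} : Set (Finset (Fin N)))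
  rw [Set.image_singleton] at hA
  obtain ⟨u, w, hu, hw, h⟩ := vanish hA SqI_bot N (by
      rintro s ⟨T, rfl, hT⟩
      simpa using Finset.card_le_card hT) p hp (fun T => sqMon K (Finset.univ : Finset (Fin N)) • c T)
      (fun T hT => by beta_reduce; rw [hc T hT, smul_zero])
      (fun T => Ideal.mul_mem_right _ _ (Ideal.mem_span_singleton_self _))
      (fun T => by rw [dif_smul, hdc, smul_zero]; exact zero_mem _)
  have h0 : sqMon K (Finset.univ : Finset (Fin N)) ≠ 0 := by
    rw [sqMon_eq]; simp
  have : ∀ T, ∃ v, u T = sqMon K (Finset.univ : Finset (Fin N)) • v := by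
    intro T
    exact Ideal.mem_span_singleton.1 (hu T)
  choose v hv using this
  refine ⟨v, fun T => mul_left_cancel₀ h0 ?_⟩
  have h2 := h T
  rw [Ideal.mem_bot.1 (hw T), add_zero, show u = fun T => sqMon K (Finset.univ : Finset (Fin N)) • v T from funext hv,
    dif_smul] at h2
  exact h2

theorem DD_quot (I : Ideal (MvPolynomial (Fin N) K)) {P} (hI : SqI I P) (k : ℕ) (hkN : k + 1 ≤ N)
    (hk : ∀ s, P s → k + 1 ≤ s.card) : DD (XX (N := N) K) (MvPolynomial (Fin N) K ⧸ I) k := by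
  intro p hp z hz hdz
  obtain ⟨c, hc, hcz⟩ := exists_lift_hg (Submodule.mkQ I) (Submodule.mkQ_surjective _) p z hz
  have hzf : z = fun T => Submodule.mkQ I (c T) := by
    ext1 T; exact (hcz T).symm
  have h1 : ∀ T, dif (XX K) c T ∈ I := by
    intro T
    have := hdz T
    rw [hzf, dif_map] at this
    rwa [← Submodule.Quotient.mk_eq_zero]
  obtain ⟨u, w, hu, hw, h2⟩ := vanish hI SqI_bot (k + 1) hk (p + 1) (by omega) (dif (XX K) c) hc.dif h1
    (fun T => by rw [dif_dif]; exact zero_mem _)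
  have h3 : ∀ T, dif (XX K) (rst p u) T = dif (XX K) c T := by
    intro T
    by_cases hT : T.card = p + 1
    · rw [dif_rst _ _ _ _ hT, h2, Ideal.mem_bot.1 (hw T), add_zero]
    · rw [(rst_hg p u).dif T hT, hc.dif T hT]
  obtain ⟨v, hv⟩ := exactS p (by omega) (fun T => c T - rst p u T)
    (fun T hT => by beta_reduce; rw [hc T hT, rst_hg p u T hT, sub_zero])
    (fun T => by rw [dif_sub, h3, sub_self])
  refine ⟨fun T => Submodule.mkQ I (v T), fun T => ?_⟩
  rw [dif_map, ← hv, map_sub, hcz, sub_eq_self]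
  rw [Submodule.mkQ_apply, Submodule.Quotient.mk_eq_zero]
  unfold rst
  split_ifs
  · exact hu T
  · exact zero_mem _

theorem DD_idealQuot (A B : Ideal (MvPolynomial (Fin N) K)) {PA PB} (hA : SqI A PA)
    (hB : SqI B PB) (k : ℕ)
    (hk : ∀ s, PA s → k ≤ s.card) : DD (XX (N := N) K) (idealQuot A B) k := by
  intro p hp z hz hdz
  set Q := Submodule.comap A.subtype (B : Submodule _ _) with hQ
  obtain ⟨c, hc, hcz⟩ := exists_lift_hg (Submodule.mkQ Q) (Submodule.mkQ_surjective _) p z hz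
  have hzf : z = fun T => Submodule.mkQ Q (c T) := by
    ext1 T; exact (hcz T).symm
  have h1 : ∀ T, dif (XX K) (fun T => A.subtype (c T)) T ∈ B := by
    intro T
    have := hdz T
    rw [hzf, dif_map, Submodule.mkQ_apply, Submodule.Quotient.mk_eq_zero] at this
    rw [dif_map]
    exact this
  obtain ⟨u, w, hu, hw, h2⟩ := vanish hA hB k hk p hp _
    (fun T hT => by beta_reduce; rw [hc T hT]; rfl) (fun T => (c T).2) h1
  refine ⟨fun T => Submodule.mkQ Q ⟨u T, hu T⟩, fun T => ?_⟩
  rw [dif_map, ← hcz, ← sub_eq_zero, ← map_sub, Submodule.mkQ_apply,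
    Submodule.Quotient.mk_eq_zero]
  change A.subtype _ ∈ B
  have h3 : A.subtype (c T) = dif (XX K) u T + w T := h2 T
  rw [map_sub, h3, ← dif_map]
  have h4 : dif (XX K) u T - (dif (XX K) u T + w T) ∈ B := by
    rw [sub_add_cancel_left]
    exact B.neg_mem (hw T)
  exact h4

end Poly

end Ksz

namespace Ksz

section Fin

variable {N : ℕ} {K : Type} [Field K]

theorem SqI.sup {A B : Ideal (MvPolynomial (Fin N) K)} {P Q} (hA : SqI A P) (hB : SqI B Q) :
    SqI (A ⊔ B) (fun s => P s ∨ Q s) := by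
  classical
  intro y
  constructor
  · intro hy b hb
    obtain ⟨a, ha, c, hc, rfl⟩ := Submodule.mem_sup.1 hy
    rcases Finset.mem_union.1 (support_add hb) with h | h
    · exact Or.inl ((hA a).1 ha b h)
    · exact Or.inr ((hB c).1 hc b h)
  · intro h
    rw [y.as_sum]
    refine Ideal.sum_mem _ fun b hb => ?_
    rcases h b hb with h | h
    · refine Ideal.mem_sup_left ((hA _).2 fun b' hb' => ?_)
      have := Finset.mem_singleton.1 (support_monomial_subset hb')
      rwa [this]
    · refine Ideal.mem_sup_right ((hB _).2 fun b' hb' => ?_)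
      have := Finset.mem_singleton.1 (support_monomial_subset hb')
      rwa [this]

theorem SqI.comap {n : ℕ} {I : Ideal (MvPolynomial (Fin (n + 1)) K)} {P} (hI : SqI I P) :
    SqI (Ideal.comap (rename Fin.castSucc : MvPolynomial (Fin n) K →ₐ[K] _) I)
      (fun s => P (s.image Fin.castSucc)) := by
  intro y
  rw [Ideal.mem_comap, hI, support_rename_of_injective (Fin.castSucc_injective n)]
  simp only [Finset.mem_image, forall_exists_index, and_imp, forall_apply_eq_imp_iff₂]
  simp only [Finsupp.mapDomain_support_of_injective (Fin.castSucc_injective n)]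

theorem SqI.le_pow {A : Ideal (MvPolynomial (Fin N) K)} {P} (hA : SqI A P) (k : ℕ)
    (hk : ∀ s, P s → k ≤ s.card) : A ≤ idealOfVars (Fin N) K ^ k := by
  intro y hy
  rw [mem_pow_idealOfVars_iff]
  intro b hb
  refine (hk _ ((hA y).1 hy b hb)).trans ?_
  rw [Finsupp.degree_apply, Finset.card_eq_sum_ones]
  refine Finset.sum_le_sum fun i hi => ?_
  simp at hi; omega

theorem dif_mem_mul (A : Ideal (MvPolynomial (Fin N) K))
    (c : Finset (Fin N) → MvPolynomial (Fin N) K) (h : ∀ T, c T ∈ A) (T) :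
    dif (XX K) c T ∈ idealOfVars (Fin N) K * A := by
  unfold dif
  refine Ideal.sum_mem _ fun i _ => ?_
  rw [smul_eq_mul]
  refine Ideal.mul_mem_mul (Ideal.subset_span ⟨i, rfl⟩) ?_
  unfold eps
  split_ifs
  · exact zsmul_mem (h _) _
  · exact zero_mem _

theorem dif_mem_pow (k : ℕ)
    (c : Finset (Fin N) → MvPolynomial (Fin N) K) (h : ∀ T, c T ∈ idealOfVars (Fin N) K ^ k) (T) :
    dif (XX K) c T ∈ idealOfVars (Fin N) K ^ (k + 1) := by
  rw [pow_succ']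
  exact dif_mem_mul _ c h T

theorem max_isMaximal : (Ideal.span (Set.range (XX (N := N) K))).IsMaximal := by
  have : Ideal.span (Set.range (XX (N := N) K)) =
      RingHom.ker (constantCoeff : MvPolynomial (Fin N) K →+* K) := by
    ext y
    have := mem_pow_idealOfVars_iff' (σ := Fin N) (R := K) 1 y
    rw [pow_one] at this
    refine this.trans ?_
    rw [RingHom.mem_ker, constantCoeff_eq]
    constructor
    · intro h; exact h 0 (by simp)
    · intro h x hx
      have : x = 0 := by
        rw [← Finsupp.degree_eq_zero_iff]; omega
      rw [this, h]
  rw [this]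
  exact RingHom.ker_isMaximal_of_surjective _ (fun a => ⟨C a, by simp⟩)

/-- the cochain of coefficients -/
def hat {r : ℕ} (g : Fin r → Finset (Fin N)) (a : Fin r → K) (F : Finset (Fin N)) : K :=
  ∑ i, if g i = F then a i else 0

theorem hat_self {r : ℕ} (g : Fin r → Finset (Fin N)) (hg : Function.Injective g) (a : Fin r → K)
    (i) : hat g a (g i) = a i := by
  unfold hat
  rw [Finset.sum_eq_single i]
  · simp
  · intro j _ hj
    rw [if_neg (fun h => hj (hg h))]
  · simp

theorem hat_ne {r : ℕ} (g : Fin r → Finset (Fin N)) (a : Fin r → K) (F)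
    (h : hat g a F ≠ 0) : ∃ i, g i = F := by
  by_contra! hc
  apply h
  unfold hat
  exact Finset.sum_eq_zero fun i _ => if_neg (hc i)

/-- constant one -/
def one1 (N : ℕ) (K : Type) [Field K] : Fin N → K := fun _ => 1

noncomputable def zz {r : ℕ} (g : Fin r → Finset (Fin N)) (a : Fin r → K) (F : Finset (Fin N)) :
    MvPolynomial (Fin N) K := C (hat g a F) * sqMon K F

theorem dif_zz {r : ℕ} (g : Fin r → Finset (Fin N)) (a : Fin r → K) (T : Finset (Fin N)) :
    dif (XX K) (zz g a) T = C (dif (one1 N K) (hat g a) T) * sqMon K T := by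
  unfold dif
  rw [map_sum, Finset.sum_mul]
  refine Finset.sum_congr rfl fun i _ => ?_
  unfold eps
  split_ifs with h
  · have : sqMon K T = X i * sqMon K (T.erase i) := by
      unfold sqMon
      rw [Finset.mul_prod_erase _ _ h]
    rw [this]
    simp only [one1, one_smul, zz, smul_eq_mul, zsmul_eq_mul, map_mul, map_intCast, map_one]
    ring
  · simp

theorem hat_hg {r : ℕ} (g : Fin r → Finset (Fin N)) (a : Fin r → K) (k : ℕ)
    (hg : ∀ i, (g i).card = k) : Hg k (hat g a) := by
  intro T hT
  by_contra h
  obtain ⟨i, rfl⟩ := hat_ne g a T h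
  exact hT (hg i)

theorem eps_hat_ne {r : ℕ} (g : Fin r → Finset (Fin N)) (a : Fin r → K) (j T)
    (h : eps j (hat g a) T ≠ 0) : j ∈ T ∧ ∃ i, g i = T.erase j := by
  unfold eps at h
  split_ifs at h with h1
  · refine ⟨h1, hat_ne g a _ fun h2 => h ?_⟩
    rw [h2, smul_zero]
  · exact absurd rfl h

theorem dif_hat_ne {r : ℕ} (g : Fin r → Finset (Fin N)) (a : Fin r → K) (T)
    (h : dif (one1 N K) (hat g a) T ≠ 0) : ∃ j ∈ T, ∃ i, g i = T.erase j := by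
  unfold dif at h
  obtain ⟨j, -, hj⟩ := Finset.exists_ne_zero_of_sum_ne_zero h
  obtain ⟨h1, h2⟩ := eps_hat_ne g a j T (fun h => hj (by rw [h, smul_zero]))
  exact ⟨j, h1, h2⟩

theorem hat_add {r : ℕ} (g : Fin r → Finset (Fin N)) (a b : Fin r → K) :
    hat g (a + b) = fun F => hat g a F + hat g b F := by
  ext F
  unfold hat
  rw [← Finset.sum_add_distrib]
  refine Finset.sum_congr rfl fun i _ => ?_
  split_ifs <;> simp

theorem hat_smul {r : ℕ} (g : Fin r → Finset (Fin N)) (t : K) (a : Fin r → K) :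
    hat g (t • a) = fun F => t • hat g a F := by
  ext F
  unfold hat
  rw [Finset.smul_sum]
  refine Finset.sum_congr rfl fun i _ => ?_
  split_ifs <;> simp

theorem exists_ker {r : ℕ} (g : Fin r → Finset (Fin N)) (W : Set (Finset (Fin N)))
    (hW : W.ncard < r) : ∃ a : Fin r → K, a ≠ 0 ∧ ∀ T ∈ W, dif (one1 N K) (hat g a) T = 0 := by
  classical
  let L : (Fin r → K) →ₗ[K] (W → K) :=
    { toFun := fun a T => dif (one1 N K) (hat g a) T
      map_add' := fun a b => by
        ext T; rw [hat_add, dif_add]; rfl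
      map_smul' := fun t a => by
        ext T; rw [hat_smul, dif_smul]; rfl }
  haveI : Fintype W := Fintype.ofFinite W
  have hF : LinearMap.ker L ≠ ⊥ := L.ker_ne_bot_of_finrank_lt (by
    rw [Module.finrank_fintype_fun_eq_card, Module.finrank_fintype_fun_eq_card, Fintype.card_fin,
      ← Nat.card_eq_fintype_card]
    exact hW)
  obtain ⟨a, ha, hne⟩ := (Submodule.ne_bot_iff _).1 hF
  refine ⟨a, hne, fun T hT => ?_⟩
  exact congrFun (LinearMap.mem_ker.1 ha) ⟨T, hT⟩

theorem sg_image {n : ℕ} (j : Fin n) (T : Finset (Fin n)) :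
    sg (Fin.castSucc j) (T.image Fin.castSucc) = sg j T := by
  unfold sg
  rw [Finset.filter_image, Finset.card_image_of_injective _ (Fin.castSucc_injective n)]
  simp

theorem dif_hat_image {n r : ℕ} (f : Fin r → Finset (Fin n)) (a : Fin r → K) (T) :
    dif (one1 (n + 1) K) (hat (fun i => (f i).image Fin.castSucc) a) (T.image Fin.castSucc) =
      dif (one1 n K) (hat f a) T := by
  unfold dif
  rw [Fin.sum_univ_castSucc]
  have hinj := Finset.image_injective (Fin.castSucc_injective n)
  have h1 : eps (Fin.last n) (hat (fun i => (f i).image Fin.castSucc) a)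
      (T.image Fin.castSucc) = 0 := by
    unfold eps
    rw [if_neg]
    simp [Fin.castSucc_ne_last]
  rw [h1, smul_zero, add_zero]
  refine Finset.sum_congr rfl fun j _ => ?_
  simp only [one1]
  congr 1
  unfold eps
  rw [← Finset.image_erase (Fin.castSucc_injective n), sg_image]
  have h2 : Fin.castSucc j ∈ T.image Fin.castSucc ↔ j ∈ T := by simp
  simp only [h2]
  congr 2
  unfold hat
  refine Finset.sum_congr rfl fun i _ => ?_
  simp only [hinj.eq_iff]

theorem top_ne_quot (I : Ideal (MvPolynomial (Fin N) K))
    (hI : I ≤ Ideal.span (Set.range (XX (N := N) K))) :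
    (⊤ : Submodule (MvPolynomial (Fin N) K) (MvPolynomial (Fin N) K ⧸ I)) ≠
      Ideal.span (Set.range (XX (N := N) K)) • ⊤ := by
  intro h
  have h1 : Submodule.mkQ I 1 ∈ Ideal.span (Set.range (XX (N := N) K)) •
      (⊤ : Submodule (MvPolynomial (Fin N) K) (MvPolynomial (Fin N) K ⧸ I)) := h ▸ trivial
  rw [← Submodule.range_mkQ, LinearMap.range_eq_map, ← Submodule.map_smul''] at h1
  obtain ⟨y, hy, hy'⟩ := h1
  rw [← sub_eq_zero, ← map_sub, Submodule.mkQ_apply, Submodule.Quotient.mk_eq_zero] at hy'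
  have hy2 : y ∈ Ideal.span (Set.range (XX (N := N) K)) := by simpa using hy
  have h2 := sub_mem hy2 (hI hy')
  rw [sub_sub_cancel] at h2
  exact max_isMaximal.ne_top ((Ideal.eq_top_iff_one _).2 h2)

theorem top_ne_idealQuot (A B : Ideal (MvPolynomial (Fin N) K)) (k : ℕ)
    (hA : A ≤ idealOfVars (Fin N) K ^ k) (hB : B ≤ idealOfVars (Fin N) K ^ (k + 1))
    (y : MvPolynomial (Fin N) K) (hyA : y ∈ A) (hy : y ∉ idealOfVars (Fin N) K ^ (k + 1)) :
    (⊤ : Submodule (MvPolynomial (Fin N) K) (idealQuot A B)) ≠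
      Ideal.span (Set.range (XX (N := N) K)) • ⊤ := by
  intro h
  set Q := Submodule.comap A.subtype (B : Submodule _ _) with hQ
  have h1 : Submodule.mkQ Q ⟨y, hyA⟩ ∈ Ideal.span (Set.range (XX (N := N) K)) •
      (⊤ : Submodule (MvPolynomial (Fin N) K) (idealQuot A B)) := h ▸ trivial
  rw [← Submodule.range_mkQ, LinearMap.range_eq_map, ← Submodule.map_smul''] at h1
  obtain ⟨w, hw, hw'⟩ := h1
  rw [← sub_eq_zero, ← map_sub, Submodule.mkQ_apply, Submodule.Quotient.mk_eq_zero] at hw'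
  have hw2 : (w : MvPolynomial (Fin N) K) - y ∈ B := hw'
  have hw3 : A.subtype w ∈ Submodule.map A.subtype (Ideal.span (Set.range (XX (N := N) K)) • ⊤) :=
    Submodule.mem_map_of_mem hw
  rw [Submodule.map_smul'', Submodule.map_top, Submodule.range_subtype, smul_eq_mul] at hw3
  have hw4 : (w : MvPolynomial (Fin N) K) ∈ idealOfVars (Fin N) K ^ (k + 1) := by
    rw [pow_succ']
    exact Ideal.mul_mono_right hA hw3
  have h2 := sub_mem hw4 (hB hw2)
  rw [sub_sub_cancel] at h2
  exact hy h2

theorem C_mul_sqMon_notMem (t : K) (ht : t ≠ 0) (T : Finset (Fin N)) (k : ℕ) (hk : T.card < k) :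
    C t * sqMon K T ∉ idealOfVars (Fin N) K ^ k := by
  rw [sqMon_eq, C_mul_monomial, mul_one, monomial_mem_pow_idealOfVars_iff _ _ ht, ee_degree]
  omega

end Fin

end Ksz

theorem stmt_14 (n : ℕ) (K : Type) [Field K] (d : ℕ) (hd : 0 < d)
    (I : Ideal (MvPolynomial (Fin (n + 1)) K))
    (hI : GenBySqMonOfDeg K (fun k => d ≤ k) I)
    (r : ℕ) (hr : 0 < r) (f : Fin r → Finset (Fin n)) (hfinj : Function.Injective f)
    (hfd : ∀ i, (f i).card + 1 = d)
    (hmem : ∀ i, sqMon K (insert (Fin.last n) ((f i).image Fin.castSucc)) ∈ I)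
    (hall : ∀ T : Finset (Fin (n + 1)), T.card = d → sqMon K T ∈ I →
      Fin.last n ∈ T → ∃ i, T = insert (Fin.last n) ((f i).image Fin.castSucc))
    (U V : Ideal (MvPolynomial (Fin n) K))
    (hU : U = Ideal.span (Set.range fun i => sqMon K (f i)))
    (hV : V = Ideal.comap (rename Fin.castSucc) I)
    (hrs : rho K d U - rho K d (U ⊓ V) < r) :
    moduleDepth (maxGraded K (n + 1)) (MvPolynomial (Fin (n + 1)) K ⧸ I) =
        ((d - 1 : ℕ) : ℕ∞) ∧
      moduleDepth (maxGraded K n) (idealQuot (U ⊔ V) V) = ((d - 1 : ℕ) : ℕ∞) := by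
  obtain ⟨k, rfl⟩ : ∃ k, d = k + 1 := ⟨d - 1, by omega⟩
  rw [Nat.add_sub_cancel]
  have hfk : ∀ i, (f i).card = k := fun i => by have := hfd i; omega
  obtain ⟨G, hG, hIG⟩ := hI
  obtain ⟨PI, hPI, hPId, hmono⟩ : ∃ PI, Ksz.SqI I PI ∧ (∀ s, PI s → k + 1 ≤ s.card) ∧
      (∀ s t, s ⊆ t → PI s → PI t) := by
    refine ⟨fun s => ∃ T ∈ G, T ⊆ s, ?_, ?_, ?_⟩
    · rw [hIG]; exact Ksz.SqI_span G
    · rintro s ⟨T, hT, hs⟩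
      exact (hG T hT).trans (Finset.card_le_card hs)
    · rintro s t hst ⟨T, hT, hs⟩
      exact ⟨T, hT, hs.trans hst⟩
  have hPV : Ksz.SqI V (fun s => PI (s.image Fin.castSucc)) := by
    rw [hV]; exact hPI.comap
  have hPVd : ∀ s : Finset (Fin n), PI (s.image Fin.castSucc) → k + 1 ≤ s.card := by
    intro s hs
    have := hPId _ hs
    rwa [Finset.card_image_of_injective _ (Fin.castSucc_injective n)] at this
  have hPU : Ksz.SqI U (fun s => ∃ T ∈ Set.range f, T ⊆ s) := by
    have : U = Ideal.span (sqMon K '' Set.range f) := by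
      rw [hU, ← Set.range_comp]; rfl
    rw [this]; exact Ksz.SqI_span _
  have hPUd : ∀ s : Finset (Fin n), (∃ T ∈ Set.range f, T ⊆ s) → k ≤ s.card := by
    rintro s ⟨T, ⟨i, rfl⟩, hs⟩
    rw [← hfk i]
    exact Finset.card_le_card hs
  have hPA := hPU.sup hPV
  have hPAd : ∀ s : Finset (Fin n), ((∃ T ∈ Set.range f, T ⊆ s) ∨ PI (s.image Fin.castSucc)) →
      k ≤ s.card := by
    rintro s (h | h)
    · exact hPUd s h
    · have := hPVd s h; omega
  have hfA : ∀ i, sqMon K (f i) ∈ U ⊔ V := fun i =>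
    Ideal.mem_sup_left ((hPU.mon _).2 ⟨f i, ⟨i, rfl⟩, subset_rfl⟩)
  -- the kernel vector
  let W : Set (Finset (Fin n)) := {T | T.card = k + 1 ∧ sqMon K T ∈ U} \
    {T | T.card = k + 1 ∧ sqMon K T ∈ U ⊓ V}
  have hW : W.ncard < r := by
    refine lt_of_le_of_lt (le_of_eq ?_) hrs
    exact Set.ncard_sdiff (fun T hT => ⟨hT.1, hT.2.1⟩) (Set.toFinite _)
  obtain ⟨a, ha0, ha⟩ := Ksz.exists_ker (K := K) f W hW
  obtain ⟨i0, hi0⟩ := Function.ne_iff.1 ha0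
  have hzero : ∀ T : Finset (Fin n), ¬ PI (T.image Fin.castSucc) →
      Ksz.dif (Ksz.one1 n K) (Ksz.hat f a) T = 0 := by
    intro T hT
    by_cases hc : T.card = k + 1
    · by_contra hne
      obtain ⟨j, hj, i, hi⟩ := Ksz.dif_hat_ne f a T hne
      apply hne
      apply ha
      refine ⟨⟨hc, (hPU.mon _).2 ⟨f i, ⟨i, rfl⟩, ?_⟩⟩, fun h => hT ((hPV.mon _).1 h.2.2)⟩
      rw [hi]; exact Finset.erase_subset _ _
    · exact (Ksz.hat_hg f a k hfk).dif T hc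
  have hlast : ∀ i, Fin.last n ∉ (f i).image Fin.castSucc := by
    intro i; simp [Fin.castSucc_ne_last]
  let g : Fin r → Finset (Fin (n + 1)) := fun i => (f i).image Fin.castSucc
  have hginj : Function.Injective g :=
    (Finset.image_injective (Fin.castSucc_injective n)).comp hfinj
  have hgk : ∀ i, (g i).card = k := fun i => by
    rw [Finset.card_image_of_injective _ (Fin.castSucc_injective n), hfk]
  have hkn : k ≤ n := by
    rw [← hfk ⟨0, hr⟩]
    simpa using Finset.card_le_univ (f ⟨0, hr⟩)
  have hIle : I ≤ idealOfVars (Fin (n + 1)) K ^ (k + 1) := hPI.le_pow _ hPId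
  have hAle : U ⊔ V ≤ idealOfVars (Fin n) K ^ k := hPA.le_pow _ hPAd
  have hVle : V ≤ idealOfVars (Fin n) K ^ (k + 1) := hPV.le_pow _ hPVd
  constructor
  · refine Ksz.depth_eq (Ksz.XX K) Ksz.max_isMaximal k _
      (Ksz.DD_quot I hPI k (by omega) hPId) ?_ ?_
    · refine ⟨fun T => Submodule.mkQ I (Ksz.zz g a T), ?_, ?_, ?_⟩
      · intro T hT
        simp only [Ksz.zz]
        rw [Ksz.hat_hg g a k hgk T hT]
        simp
      · intro T
        rw [Ksz.dif_map, Ksz.dif_zz, Submodule.mkQ_apply, Submodule.Quotient.mk_eq_zero]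
        by_cases hT : PI T
        · exact Ideal.mul_mem_left _ _ ((hPI.mon T).2 hT)
        · have : Ksz.dif (Ksz.one1 (n + 1) K) (Ksz.hat g a) T = 0 := by
            by_cases hl : Fin.last n ∈ T
            · by_contra hne
              obtain ⟨j, hj, i, hi⟩ := Ksz.dif_hat_ne g a T hne
              have hjl : j = Fin.last n := by
                by_contra hjl
                apply hlast i
                change _ ∈ g i
                rw [hi]
                exact Finset.mem_erase.2 ⟨Ne.symm hjl, hl⟩
              apply hT
              have h1 := (hPI.mon _).1 (hmem i)
              change PI (insert _ (g i)) at h1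
              rwa [hi, hjl, Finset.insert_erase hl] at h1
            · obtain ⟨T', rfl⟩ : ∃ T' : Finset (Fin n), T = T'.image Fin.castSucc := by
                refine ⟨Finset.univ.filter (fun j => Fin.castSucc j ∈ T), ?_⟩
                ext j
                simp only [Finset.mem_image, Finset.mem_filter, Finset.mem_univ, true_and]
                constructor
                · intro hj
                  have : j ≠ Fin.last n := fun h => hl (h ▸ hj)
                  obtain ⟨j', rfl⟩ := Fin.exists_castSucc_eq.2 this
                  exact ⟨j', hj, rfl⟩
                · rintro ⟨j', h, rfl⟩; exact h
              rw [Ksz.dif_hat_image]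
              exact hzero T' hT
          rw [this]
          simp
      · rintro ⟨u, hu⟩
        obtain ⟨v, hv⟩ := Ksz.exists_lift (Submodule.mkQ I) (Submodule.mkQ_surjective _) u
        have huf : u = fun T => Submodule.mkQ I (v T) := by
          ext1 T; exact (hv T).symm
        have hw : ∀ T, Ksz.dif (Ksz.XX K) v T - Ksz.zz g a T ∈ I := by
          intro T
          rw [← Submodule.Quotient.mk_eq_zero, ← Submodule.mkQ_apply, map_sub, sub_eq_zero,
            ← Ksz.dif_map, ← huf]
          exact hu T
        set T0 := insert (Fin.last n) (g i0) with hT0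
        have h1 := Ksz.dif_mem_pow (k + 1) (fun T => Ksz.dif (Ksz.XX K) v T - Ksz.zz g a T)
          (fun T => hIle (hw T)) T0
        rw [Ksz.dif_sub, Ksz.dif_dif (Ksz.XX K) v, zero_sub, neg_mem_iff, Ksz.dif_zz] at h1
        have hcard : T0.card = k + 1 := by
          rw [hT0, Finset.card_insert_of_notMem (hlast i0), hgk]
        refine Ksz.C_mul_sqMon_notMem _ ?_ T0 (k + 1 + 1) (by omega) h1
        unfold Ksz.dif
        rw [Finset.sum_eq_single (Fin.last n)]
        · unfold Ksz.eps
          rw [if_pos (Finset.mem_insert_self _ _), hT0, Finset.erase_insert (hlast i0),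
            Ksz.hat_self g hginj]
          simp only [Ksz.one1, one_smul, Ksz.sg]
          rw [zsmul_eq_mul]
          refine mul_ne_zero ?_ hi0
          push_cast
          exact pow_ne_zero _ (by simp)
        · intro j _ hj
          by_contra hne
          obtain ⟨h1, i, hi⟩ := Ksz.eps_hat_ne g a j T0 (fun h => hne (by rw [h, smul_zero]))
          apply hlast i
          change _ ∈ g i
          rw [hi]
          exact Finset.mem_erase.2 ⟨Ne.symm hj, Finset.mem_insert_self _ _⟩
        · simp
    · apply Ksz.top_ne_quot
      refine hIle.trans ?_
      exact Ideal.pow_le_self (by omega)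
  · refine Ksz.depth_eq (Ksz.XX K) Ksz.max_isMaximal k _
      (Ksz.DD_idealQuot _ _ hPA hPV k hPAd) ?_ ?_
    · set Q := Submodule.comap (U ⊔ V).subtype (V : Submodule _ _) with hQ
      have hzA : ∀ T, Ksz.zz f a T ∈ U ⊔ V := by
        intro T
        unfold Ksz.zz
        by_cases h : Ksz.hat f a T = 0
        · rw [h]; simp
        · obtain ⟨i, rfl⟩ := Ksz.hat_ne f a T h
          exact Ideal.mul_mem_left _ _ (hfA i)
      refine ⟨fun T => Submodule.mkQ Q ⟨Ksz.zz f a T, hzA T⟩, ?_, ?_, ?_⟩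
      · intro T hT
        beta_reduce
        rw [Submodule.mkQ_apply, Submodule.Quotient.mk_eq_zero]
        change Ksz.zz f a T ∈ V
        simp only [Ksz.zz]
        rw [Ksz.hat_hg f a k hfk T hT]
        simp
      · intro T
        rw [Ksz.dif_map, Submodule.mkQ_apply, Submodule.Quotient.mk_eq_zero]
        change (U ⊔ V).subtype _ ∈ V
        rw [← Ksz.dif_map]
        change Ksz.dif (Ksz.XX K) (Ksz.zz f a) T ∈ V
        rw [Ksz.dif_zz]
        by_cases hT : PI (T.image Fin.castSucc)
        · exact Ideal.mul_mem_left _ _ ((hPV.mon T).2 hT)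
        · rw [hzero T hT]; simp
      · rintro ⟨u, hu⟩
        obtain ⟨v, hv⟩ := Ksz.exists_lift (Submodule.mkQ Q) (Submodule.mkQ_surjective _) u
        have huf : u = fun T => Submodule.mkQ Q (v T) := by
          ext1 T; exact (hv T).symm
        have hw : Ksz.dif (Ksz.XX K) (fun T => (U ⊔ V).subtype (v T)) (f i0) -
            Ksz.zz f a (f i0) ∈ V := by
          have h1 := hu (f i0)
          rw [huf, Ksz.dif_map, ← sub_eq_zero, ← map_sub, Submodule.mkQ_apply,
            Submodule.Quotient.mk_eq_zero] at h1
          rw [Ksz.dif_map]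
          exact h1
        have h1 := Ksz.dif_mem_pow k (fun T => (U ⊔ V).subtype (v T))
          (fun T => hAle (v T).2) (f i0)
        have h2 := sub_mem h1 (hVle hw)
        rw [sub_sub_cancel] at h2
        refine Ksz.C_mul_sqMon_notMem _ ?_ (f i0) (k + 1) (by rw [hfk]; omega) h2
        rw [Ksz.hat_self f hfinj]
        exact hi0
    · refine Ksz.top_ne_idealQuot _ _ k hAle hVle _ (hfA i0) ?_
      have := Ksz.C_mul_sqMon_notMem (1 : K) one_ne_zero (f i0) (k + 1) (by rw [hfk]; omega)
      simpa using this
end
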